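/- There is a constant C > 0 such that for every f ∈ ℓ²(ℤ), ‖ sup_{n ∈ ℕ} |ℳ_{2^n} f| ‖_{ℓ²(ℤ)} ≤ C ‖f‖_{ℓ²(ℤ)}. -/

import Mathlib

open scoped BigOperators

/-- The set of primes `p ≤ N`. -/
def primesUpTo (N : ℕ) : Finset ℕ := (Finset.range (N + 1)).filter Nat.Prime

/-- `ϑ(N) = Σ_{p ∈ ℙ_N} log p`. -/
noncomputable def theta (N : ℕ) : ℝ := ∑ p ∈ primesUpTo N, Real.log p

/-- The weighted average `ℳ_N f(x) = (1/ϑ(N)) Σ_{p ∈ ℙ_N} f(x + p) log p`. -/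
noncomputable def weightedPrimeAvg (f : ℤ → ℂ) (N : ℕ) (x : ℤ) : ℂ :=
  ((theta N : ℂ))⁻¹ * ∑ p ∈ primesUpTo N, f (x + p) * (Real.log p : ℂ)

/-!
Choosing at each `x` a scale that nearly attains the supremum turns the maximal inequality into a
bound uniform over choice functions `κ : ℤ → ℕ`. At scale `2 ^ k`, with `w ≍ k` a power of `2` and
`R = 2 ^ w`, the primes up to `R` contribute a multiplier of norm `O(1 / k)`, which is
square-summable in `k`. On the primes in `(R, 2 ^ k]` the weight `log p` is `O` of a Selberg weight
of level `R`. Expanded in products of the local factors `-c_p / φ(p)`, this weight is the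
normalised indicator of the integers without prime factors up to `w`, times one plus a combination
of nontrivial products whose coefficients are `O(1 / w)`. By the large sieve the second part
contributes `O(1 / w)` in norm, square-summably once more. The indicator telescopes along
`w = 1, 2, 4, …` into periodic increments. Averaged over a fixed multiple of its period, the
`j`-th increment has norm `O(2 ^ (-j))`, again by the large sieve, and the Hardy–Littlewood maximal
inequality along the multiples of that period handles it at all scales at once.
-/

open Finset ENNReal

/-! ### Two principles for finite matrices -/

lemma sum_sq_norm_transpose_le {ι κ 𝕜 : Type*} [RCLike 𝕜] (s : Finset ι) (t : Finset κ)
    (A : ι → κ → 𝕜) {C : ℝ} (hC : 0 ≤ C)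
    (hA : ∀ b : ι → 𝕜, ∑ j ∈ t, ‖∑ i ∈ s, A i j * b i‖ ^ 2 ≤ C * ∑ i ∈ s, ‖b i‖ ^ 2)
    (a : κ → 𝕜) :
    ∑ i ∈ s, ‖∑ j ∈ t, A i j * a j‖ ^ 2 ≤ C * ∑ j ∈ t, ‖a j‖ ^ 2 := by
  let T : ι → 𝕜 := fun i ↦ ∑ j ∈ t, A i j * a j
  let b : ι → 𝕜 := fun i ↦ starRingEnd 𝕜 (T i)
  let U : κ → 𝕜 := fun j ↦ ∑ i ∈ s, A i j * b i
  change ∑ i ∈ s, ‖T i‖ ^ 2 ≤ _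
  set S := ∑ i ∈ s, ‖T i‖ ^ 2
  have S_nonneg : 0 ≤ S := sum_nonneg fun _ _ ↦ by positivity
  have S_eq : (S : 𝕜) = ∑ j ∈ t, a j * U j := by
    calc (S : 𝕜) = ∑ i ∈ s, b i * T i := by simp [S, b, RCLike.conj_mul]
      _ = ∑ i ∈ s, ∑ j ∈ t, a j * (A i j * b i) := by
        refine sum_congr rfl fun i _ ↦ ?_
        rw [mul_sum]
        exact sum_congr rfl fun j _ ↦ by ring
      _ = ∑ j ∈ t, a j * U j := by
        rw [sum_comm]
        simp only [U, mul_sum]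
  have S_le : S ≤ ∑ j ∈ t, ‖a j‖ * ‖U j‖ := by
    calc S = ‖∑ j ∈ t, a j * U j‖ := by rw [← S_eq, RCLike.norm_of_nonneg S_nonneg]
      _ ≤ ∑ j ∈ t, ‖a j * U j‖ := norm_sum_le _ _
      _ = ∑ j ∈ t, ‖a j‖ * ‖U j‖ := by simp only [norm_mul]
  have U_le : ∑ j ∈ t, ‖U j‖ ^ 2 ≤ C * S := by
    simpa only [b, RCLike.norm_conj] using hA b
  have sq_le : S * S ≤ S * (C * ∑ j ∈ t, ‖a j‖ ^ 2) := by
    calc S * S ≤ (∑ j ∈ t, ‖a j‖ * ‖U j‖) ^ 2 := by nlinarith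
      _ ≤ (∑ j ∈ t, ‖a j‖ ^ 2) * ∑ j ∈ t, ‖U j‖ ^ 2 := sum_mul_sq_le_sq_mul_sq _ _ _
      _ ≤ (∑ j ∈ t, ‖a j‖ ^ 2) * (C * S) := by gcongr
      _ = S * (C * ∑ j ∈ t, ‖a j‖ ^ 2) := by ring
  rcases S_nonneg.eq_or_lt with h | h
  · rw [← h]
    positivity
  · exact le_of_mul_le_mul_left sq_le h

lemma sum_sq_sum_mul_le_of_kernel_le {α : Type*} (X : Finset α) (K : α → α → ℝ) {A : ℝ}
    (hK : ∀ x y, 0 ≤ K x y)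
    (hA : ∀ x ∈ X, ∀ y ∈ X, ∑ z ∈ X, K x z * K y z ≤ A * (K x y + K y x)) (h : α → ℝ) :
    ∑ z ∈ X, (∑ x ∈ X, K x z * h x) ^ 2 ≤ (2 * A) ^ 2 * ∑ x ∈ X, h x ^ 2 := by
  let g : α → ℝ := fun z ↦ ∑ x ∈ X, K x z * |h x|
  have abs_sum_le (z : α) : |∑ x ∈ X, K x z * h x| ≤ g z :=
    (abs_sum_le_sum_abs _ _).trans_eq (by simp only [g, abs_mul, abs_of_nonneg (hK _ _)])
  have sum_sq_le : ∑ z ∈ X, g z ^ 2 ≤ 2 * A * ∑ z ∈ X, |h z| * g z := by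
    calc ∑ z ∈ X, g z ^ 2
        = ∑ x ∈ X, ∑ y ∈ X, |h x| * |h y| * ∑ z ∈ X, K x z * K y z := by
          simp only [g, pow_two, sum_mul_sum]
          simp only [mul_sum]
          rw [sum_comm]
          refine sum_congr rfl fun x _ ↦ ?_
          rw [sum_comm]
          exact sum_congr rfl fun y _ ↦ sum_congr rfl fun z _ ↦ by ring
      _ ≤ ∑ x ∈ X, ∑ y ∈ X, |h x| * |h y| * (A * (K x y + K y x)) := by
          gcongr with x hx y hy
          exact hA x hx y hy
      _ = ∑ x ∈ X, ∑ y ∈ X, A * (|h y| * (K x y * |h x|)) +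
            ∑ x ∈ X, ∑ y ∈ X, A * (|h x| * (K y x * |h y|)) := by
          simp only [← sum_add_distrib]
          exact sum_congr rfl fun x _ ↦ sum_congr rfl fun y _ ↦ by ring
      _ = 2 * A * ∑ z ∈ X, |h z| * g z := by
          rw [sum_comm]
          simp only [← mul_sum, g]
          ring
  have amgm : 2 * A * ∑ z ∈ X, |h z| * g z ≤
      ∑ z ∈ X, ((2 * A) ^ 2 / 2 * h z ^ 2 + g z ^ 2 / 2) := by
    rw [mul_sum]
    gcongr with z
    nlinarith [sq_nonneg (2 * A * |h z| - g z), sq_abs (h z)]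
  rw [sum_add_distrib, ← mul_sum, ← sum_div] at amgm
  calc ∑ z ∈ X, (∑ x ∈ X, K x z * h x) ^ 2 ≤ ∑ z ∈ X, g z ^ 2 :=
        sum_le_sum fun z _ ↦ sq_le_sq.2 ((abs_sum_le z).trans (le_abs_self _))
    _ ≤ (2 * A) ^ 2 * ∑ x ∈ X, h x ^ 2 := by linarith

/-! ### The Hardy–Littlewood maximal inequality -/

/-- A kernel on `ℤ` with quadratic decay at scale `N`, chosen so that its sum telescopes. -/
noncomputable def decayKernel (N : ℕ) (n : ℤ) : ℝ :=
  N / ((N + |(n : ℝ)|) * (N + |(n : ℝ)| + 1))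

lemma decayKernel_nonneg (N : ℕ) (n : ℤ) : 0 ≤ decayKernel N n := by
  unfold decayKernel
  positivity

lemma decayKernel_neg (N : ℕ) (n : ℤ) : decayKernel N (-n) = decayKernel N n := by
  simp [decayKernel]

lemma decayKernel_pos {N : ℕ} (hN : 1 ≤ N) (n : ℤ) : 0 < decayKernel N n := by
  have : (0 : ℝ) < N := by exact_mod_cast hN
  unfold decayKernel
  positivity

lemma hasSum_decayKernel_natCast {N : ℕ} (hN : 1 ≤ N) :
    HasSum (fun n : ℕ ↦ decayKernel N n) 1 := by
  have hN' : (0 : ℝ) < N := by exact_mod_cast hN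
  have telescope (B : ℕ) : ∑ n ∈ range B, decayKernel N n = 1 - N / (N + B) := by
    induction B with
    | zero => simp [hN'.ne']
    | succ B ih =>
      rw [sum_range_succ, ih, decayKernel]
      push_cast
      rw [abs_of_nonneg (Nat.cast_nonneg B)]
      field_simp
      ring
  rw [hasSum_iff_tendsto_nat_of_nonneg fun n ↦ decayKernel_nonneg N n]
  simp only [telescope]
  simpa using (((tendsto_const_nhds (x := (N : ℝ))).div_atTop
    (Filter.tendsto_atTop_add_const_left _ (N : ℝ) tendsto_natCast_atTop_atTop)).const_sub 1)

lemma sum_decayKernel_le_two {N : ℕ} (hN : 1 ≤ N) (X : Finset ℤ) :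
    ∑ x ∈ X, decayKernel N x ≤ 2 := by
  have hasSum_neg : HasSum (fun n : ℕ ↦ decayKernel N (-n)) 1 := by
    simpa only [decayKernel_neg] using hasSum_decayKernel_natCast hN
  have := sum_le_hasSum X (fun x _ ↦ decayKernel_nonneg N x)
    ((hasSum_decayKernel_natCast hN).of_nat_of_neg hasSum_neg)
  linarith [decayKernel_nonneg N 0]

lemma inv_decayKernel_sub_le {N M : ℕ} (hM : 1 ≤ M) (hMN : M ≤ N) (a b : ℤ) :
    (decayKernel N (a - b))⁻¹ ≤ 4 * ((decayKernel M b)⁻¹ + (decayKernel N a)⁻¹) := by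
  have hM' : (1 : ℝ) ≤ M := by exact_mod_cast hM
  have hMN' : (M : ℝ) ≤ N := by exact_mod_cast hMN
  have hN' : (1 : ℝ) ≤ N := hM'.trans hMN'
  simp only [decayKernel, inv_div]
  have triangle : |((a - b : ℤ) : ℝ)| ≤ |(a : ℝ)| + |(b : ℝ)| := by
    push_cast
    exact abs_sub _ _
  have hn := abs_nonneg ((a - b : ℤ) : ℝ)
  have hu := abs_nonneg (a : ℝ)
  have hv := abs_nonneg (b : ℝ)
  set n := |((a - b : ℤ) : ℝ)|
  set u := |(a : ℝ)|
  set v := |(b : ℝ)|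
  have smaller_scale : v ^ 2 / N ≤ (M + v) * (M + v + 1) / M := by
    rw [div_le_div_iff₀ (by linarith) (by linarith)]
    calc v ^ 2 * M ≤ v ^ 2 * N := by gcongr
      _ ≤ (M + v) * (M + v + 1) * N := by gcongr; nlinarith
  have larger_scale :
      (N + n) * (N + n + 1) / N ≤ 4 * (v ^ 2 / N + (N + u) * (N + u + 1) / N) := by
    rw [← add_div, ← mul_div_assoc]
    refine div_le_div_of_nonneg_right ?_ (by linarith)
    have : (N + n) ^ 2 ≤ (N + u + v) ^ 2 := pow_le_pow_left₀ (by linarith) (by linarith) 2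
    nlinarith [sq_nonneg (N + u - v)]
  linarith

lemma decayKernel_mul_le {N M : ℕ} (hM : 1 ≤ M) (hMN : M ≤ N) (a b : ℤ) :
    decayKernel N a * decayKernel M b ≤
      4 * decayKernel N (a - b) * (decayKernel N a + decayKernel M b) := by
  have hN : 1 ≤ N := hM.trans hMN
  have ha := decayKernel_pos hN a
  have hb := decayKernel_pos hM b
  have hab := decayKernel_pos hN (a - b)
  have key := inv_decayKernel_sub_le hM hMN a b
  rw [inv_le_iff_one_le_mul₀ hab] at key
  calc decayKernel N a * decayKernel M b
      ≤ decayKernel N a * decayKernel M b *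
        (4 * ((decayKernel M b)⁻¹ + (decayKernel N a)⁻¹) * decayKernel N (a - b)) :=
        le_mul_of_one_le_right (by positivity) key
    _ = _ := by field_simp

lemma sum_decayKernel_mul_le {N M : ℕ} (hM : 1 ≤ M) (hMN : M ≤ N) (X : Finset ℤ) (x y : ℤ) :
    ∑ z ∈ X, decayKernel N (x - z) * decayKernel M (y - z) ≤ 16 * decayKernel N (x - y) := by
  have translate {L : ℕ} (hL : 1 ≤ L) (w : ℤ) : ∑ z ∈ X, decayKernel L (w - z) ≤ 2 := by
    simpa using sum_decayKernel_le_two hL (X.map (Equiv.subLeft w).toEmbedding)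
  calc ∑ z ∈ X, decayKernel N (x - z) * decayKernel M (y - z)
      ≤ ∑ z ∈ X, 4 * decayKernel N (x - y) *
          (decayKernel N (x - z) + decayKernel M (y - z)) := by
        refine sum_le_sum fun z _ ↦ ?_
        simpa using decayKernel_mul_le hM hMN (x - z) (y - z)
    _ = 4 * decayKernel N (x - y) *
          (∑ z ∈ X, decayKernel N (x - z) + ∑ z ∈ X, decayKernel M (y - z)) := by
        rw [← mul_sum, sum_add_distrib]
    _ ≤ 4 * decayKernel N (x - y) * (2 + 2) := by
        have := decayKernel_nonneg N (x - y)
        gcongr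
        exacts [translate (hM.trans hMN) x, translate hM y]
    _ = 16 * decayKernel N (x - y) := by ring

lemma sum_sq_decayKernel_le (X : Finset ℤ) {N : ℤ → ℕ} (hN : ∀ x, 1 ≤ N x) (f : ℤ → ℝ) :
    ∑ x ∈ X, (∑ z ∈ X, decayKernel (N x) (x - z) * f z) ^ 2 ≤ 32 ^ 2 * ∑ x ∈ X, f x ^ 2 := by
  have kernel_bound (x y : ℤ) :
      ∑ z ∈ X, decayKernel (N x) (x - z) * decayKernel (N y) (y - z) ≤
        16 * (decayKernel (N x) (x - y) + decayKernel (N y) (y - x)) := by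
    have hxy := decayKernel_nonneg (N x) (x - y)
    have hyx := decayKernel_nonneg (N y) (y - x)
    rcases le_total (N y) (N x) with h | h
    · linarith [sum_decayKernel_mul_le (hN y) h X x y]
    · simp only [mul_comm (decayKernel (N x) _)]
      linarith [sum_decayKernel_mul_le (hN x) h X y x]
  have dual (h : ℤ → ℝ) := sum_sq_sum_mul_le_of_kernel_le X
    (fun x z ↦ decayKernel (N x) (x - z)) (fun _ _ ↦ decayKernel_nonneg _ _)
    (fun x _ y _ ↦ kernel_bound x y) h
  rw [show (2 * 16 : ℝ) = 32 by norm_num] at dual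
  simpa only [Real.norm_eq_abs, sq_abs] using
    sum_sq_norm_transpose_le X X (fun x z ↦ decayKernel (N x) (x - z)) (C := 32 ^ 2)
      (by positivity) (by simpa only [Real.norm_eq_abs, sq_abs] using dual) f

/-! ### Squared `ℓ²` norms -/

section SqNorm

variable {α ι κ E E' : Type*} [NormedAddCommGroup E] [NormedAddCommGroup E']

/-- The squared `ℓ²` norm, as an extended nonnegative real so that no summability is assumed. -/
noncomputable def sqNorm (f : α → E) : ℝ≥0∞ := ∑' x, ‖f x‖ₑ ^ 2

lemma enorm_sq_eq_ofReal (v : E) : ‖v‖ₑ ^ 2 = ENNReal.ofReal (‖v‖ ^ 2) := by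
  rw [← ofReal_norm, ENNReal.ofReal_pow (norm_nonneg v)]

lemma sum_enorm_sq_eq_ofReal (s : Finset ι) (v : ι → E) :
    ∑ i ∈ s, ‖v i‖ₑ ^ 2 = ENNReal.ofReal (∑ i ∈ s, ‖v i‖ ^ 2) := by
  simp only [enorm_sq_eq_ofReal]
  exact (ENNReal.ofReal_sum_of_nonneg fun _ _ ↦ by positivity).symm

lemma sqNorm_norm (f : α → E) : sqNorm (fun x ↦ ‖f x‖) = sqNorm f := by
  simp only [sqNorm, enorm_norm]

lemma sqNorm_mono {f : α → E} {g : α → E'} (h : ∀ x, ‖f x‖ ≤ ‖g x‖) : sqNorm f ≤ sqNorm g := by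
  refine ENNReal.tsum_le_tsum fun x ↦ ?_
  rw [enorm_sq_eq_ofReal, enorm_sq_eq_ofReal]
  exact ENNReal.ofReal_le_ofReal (pow_le_pow_left₀ (norm_nonneg _) (h x) 2)

lemma sqNorm_const_mul (c : ℝ) (f : α → ℝ) :
    sqNorm (fun x ↦ c * f x) = ENNReal.ofReal (c ^ 2) * sqNorm f := by
  simp only [sqNorm, enorm_mul, mul_pow, ENNReal.tsum_mul_left]
  rw [enorm_sq_eq_ofReal c, Real.norm_eq_abs, sq_abs]

lemma sqNorm_comp_equiv (e : α ≃ α) (f : α → E) : sqNorm (fun x ↦ f (e x)) = sqNorm f :=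
  e.tsum_eq fun x ↦ ‖f x‖ₑ ^ 2

lemma sqNorm_eq_ofReal_tsum {f : α → E} (hf : Summable fun x ↦ ‖f x‖ ^ 2) :
    sqNorm f = ENNReal.ofReal (∑' x, ‖f x‖ ^ 2) := by
  simp only [sqNorm, enorm_sq_eq_ofReal]
  exact (ENNReal.ofReal_tsum_of_nonneg (fun _ ↦ by positivity) hf).symm

lemma summable_sq_norm_of_sqNorm_ne_top {f : α → E} (hf : sqNorm f ≠ ∞) :
    Summable fun x ↦ ‖f x‖ ^ 2 := by
  simp only [sqNorm, enorm_sq_eq_ofReal] at hf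
  simpa only [ENNReal.toReal_ofReal (sq_nonneg ‖_‖)] using ENNReal.summable_toReal hf

lemma sqrt_tsum_sq_norm_le_of_sqNorm_le {β : Type*} {f : α → E} {g : β → E'} {C : ℝ≥0∞}
    (hC : C ≠ ∞) (hg : Summable fun y ↦ ‖g y‖ ^ 2) (h : sqNorm f ≤ C * sqNorm g) :
    √(∑' x, ‖f x‖ ^ 2) ≤ √C.toReal * √(∑' y, ‖g y‖ ^ 2) := by
  rw [sqNorm_eq_ofReal_tsum hg] at h
  have bound_ne_top := ENNReal.mul_ne_top hC (ENNReal.ofReal_ne_top (r := ∑' y, ‖g y‖ ^ 2))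
  have hf := summable_sq_norm_of_sqNorm_ne_top (ne_top_of_le_ne_top bound_ne_top h)
  rw [sqNorm_eq_ofReal_tsum hf, ENNReal.ofReal_le_iff_le_toReal bound_ne_top, ENNReal.toReal_mul,
    ENNReal.toReal_ofReal (tsum_nonneg fun _ ↦ sq_nonneg _)] at h
  rw [← Real.sqrt_mul ENNReal.toReal_nonneg]
  exact Real.sqrt_le_sqrt h

lemma sqNorm_le_of_forall_finset {β : Type*} {f : α → E} {g : β → E'} {C : ℝ} (hC : 0 ≤ C)
    (h : ∀ X : Finset α, ∃ Y : Finset β, ∑ x ∈ X, ‖f x‖ ^ 2 ≤ C * ∑ y ∈ Y, ‖g y‖ ^ 2) :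
    sqNorm f ≤ ENNReal.ofReal C * sqNorm g := by
  refine ENNReal.summable.tsum_le_of_sum_le fun X ↦ ?_
  obtain ⟨Y, hY⟩ := h X
  calc ∑ x ∈ X, ‖f x‖ₑ ^ 2 ≤ ENNReal.ofReal (C * ∑ y ∈ Y, ‖g y‖ ^ 2) := by
        rw [sum_enorm_sq_eq_ofReal]
        exact ENNReal.ofReal_le_ofReal hY
    _ = ENNReal.ofReal C * ∑ y ∈ Y, ‖g y‖ₑ ^ 2 := by
        rw [ENNReal.ofReal_mul hC, sum_enorm_sq_eq_ofReal]
    _ ≤ ENNReal.ofReal C * sqNorm g := by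
        gcongr
        exact ENNReal.sum_le_tsum Y

lemma sqNorm_choice_le_tsum (u : ι → α → E) (κ : α → ι) :
    sqNorm (fun x ↦ u (κ x) x) ≤ ∑' i, sqNorm (u i) := by
  simp only [sqNorm]
  rw [ENNReal.tsum_comm]
  exact ENNReal.tsum_le_tsum fun x ↦ ENNReal.le_tsum (f := fun i ↦ ‖u i x‖ₑ ^ 2) (κ x)

lemma sqNorm_choice_le_tsum_of_le (u : ℕ → α → E) {κ : α → ℕ} {n : ℕ} (hκ : ∀ x, n ≤ κ x)
    {b : ℕ → ℝ≥0∞} (hb : ∀ k, n ≤ k → sqNorm (u k) ≤ b k) :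
    sqNorm (fun x ↦ u (κ x) x) ≤ ∑' k, b k :=
  calc sqNorm (fun x ↦ u (κ x) x) ≤ ∑' k : {k // n ≤ k}, sqNorm (u k) :=
        sqNorm_choice_le_tsum (fun k : {k // n ≤ k} ↦ u k) fun x ↦ ⟨κ x, hκ x⟩
    _ ≤ ∑' k : {k // n ≤ k}, b k := ENNReal.tsum_le_tsum fun k ↦ hb k k.2
    _ ≤ ∑' k, b k := ENNReal.tsum_comp_le_tsum_of_injective Subtype.val_injective b

lemma sqNorm_choice_le_sum_add (u : ℕ → α → E) (κ : α → ℕ) (n : ℕ) :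
    sqNorm (fun x ↦ u (κ x) x) ≤
      ∑ k ∈ range n, sqNorm (u k) + sqNorm (fun x ↦ u (max (κ x) n) x) := by
  simp only [sqNorm]
  rw [← Summable.tsum_finsetSum fun _ _ ↦ ENNReal.summable, ← ENNReal.tsum_add]
  refine ENNReal.tsum_le_tsum fun x ↦ ?_
  rcases lt_or_ge (κ x) n with h | h
  · exact (single_le_sum (f := fun k ↦ ‖u k x‖ₑ ^ 2) (fun _ _ ↦ zero_le) (mem_range.2 h)).trans
      le_self_add
  · rw [max_eq_left h]
    exact le_add_self

lemma tsum_mul_sq_le (c a : ι → ℝ≥0∞) :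
    (∑' i, c i * a i) ^ 2 ≤ (∑' i, c i) * ∑' i, c i * a i ^ 2 := by
  have root_bound : ∑' i, c i * a i ≤ ((∑' i, c i) * ∑' i, c i * a i ^ 2) ^ (2⁻¹ : ℝ) := by
    refine ENNReal.summable.tsum_le_of_sum_le fun s ↦ ?_
    calc ∑ i ∈ s, c i * a i
        ≤ (∑ i ∈ s, c i) ^ (1 - (2 : ℝ)⁻¹) * (∑ i ∈ s, c i * a i ^ (2 : ℝ)) ^ (2 : ℝ)⁻¹ :=
          ENNReal.inner_le_weight_mul_Lp_of_nonneg s one_le_two c a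
      _ = ((∑ i ∈ s, c i) * ∑ i ∈ s, c i * a i ^ 2) ^ (2⁻¹ : ℝ) := by
          rw [ENNReal.mul_rpow_of_nonneg _ _ (by norm_num)]
          norm_num
      _ ≤ ((∑' i, c i) * ∑' i, c i * a i ^ 2) ^ (2⁻¹ : ℝ) := by
          gcongr <;> exact ENNReal.sum_le_tsum s
  calc (∑' i, c i * a i) ^ 2 ≤ (((∑' i, c i) * ∑' i, c i * a i ^ 2) ^ (2⁻¹ : ℝ)) ^ 2 := by gcongr
    _ = (∑' i, c i) * ∑' i, c i * a i ^ 2 := by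
      rw [← ENNReal.rpow_natCast, ← ENNReal.rpow_mul]
      norm_num

lemma sqNorm_le_of_enorm_le_tsum {f : α → E} {u : ι → α → E'} (c : ι → ℝ≥0∞)
    (h : ∀ x, ‖f x‖ₑ ≤ ∑' i, c i * ‖u i x‖ₑ) :
    sqNorm f ≤ (∑' i, c i) * ∑' i, c i * sqNorm (u i) :=
  calc sqNorm f ≤ ∑' x, (∑' i, c i) * ∑' i, c i * ‖u i x‖ₑ ^ 2 :=
        ENNReal.tsum_le_tsum fun x ↦ (pow_le_pow_left' (h x) 2).trans (tsum_mul_sq_le c _)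
    _ = (∑' i, c i) * ∑' i, c i * sqNorm (u i) := by
        rw [ENNReal.tsum_mul_left, ENNReal.tsum_comm]
        simp only [ENNReal.tsum_mul_left, sqNorm]

lemma sqNorm_sum_smul_le [NormedSpace ℝ E] (s : Finset ι) {c : ι → ℝ} (hc : ∀ i ∈ s, 0 ≤ c i)
    (u : ι → α → E) :
    sqNorm (fun x ↦ ∑ i ∈ s, c i • u i x) ≤
      ENNReal.ofReal (∑ i ∈ s, c i) * ∑ i ∈ s, ENNReal.ofReal (c i) * sqNorm (u i) := by
  have pointwise (x : α) :
      ‖∑ i ∈ s, c i • u i x‖ₑ ≤ ∑' i : s, ENNReal.ofReal (c i) * ‖u i x‖ₑ := by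
    rw [Finset.tsum_subtype s fun i ↦ ENNReal.ofReal (c i) * ‖u i x‖ₑ]
    refine (enorm_sum_le _ _).trans (sum_le_sum fun i hi ↦ ?_)
    rw [enorm_smul, Real.enorm_of_nonneg (hc i hi)]
  have := sqNorm_le_of_enorm_le_tsum (u := fun (i : s) x ↦ u i x)
    (fun i : s ↦ ENNReal.ofReal (c i)) pointwise
  rwa [Finset.tsum_subtype s fun i ↦ ENNReal.ofReal (c i),
    Finset.tsum_subtype s fun i ↦ ENNReal.ofReal (c i) * sqNorm (u i),
    ← ENNReal.ofReal_sum_of_nonneg hc] at this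

lemma sum_sqNorm_le_of_forall_sum_sq_le {s : Finset ι} {t : Finset κ} {u : ι → α → E}
    {v : κ → α → E'} {C : ℝ} (hC : 0 ≤ C)
    (h : ∀ x, ∑ i ∈ s, ‖u i x‖ ^ 2 ≤ C * ∑ k ∈ t, ‖v k x‖ ^ 2) :
    ∑ i ∈ s, sqNorm (u i) ≤ ENNReal.ofReal C * ∑ k ∈ t, sqNorm (v k) := by
  simp only [sqNorm]
  rw [← Summable.tsum_finsetSum fun _ _ ↦ ENNReal.summable,
    ← Summable.tsum_finsetSum fun _ _ ↦ ENNReal.summable, ← ENNReal.tsum_mul_left]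
  refine ENNReal.tsum_le_tsum fun x ↦ ?_
  rw [sum_enorm_sq_eq_ofReal, sum_enorm_sq_eq_ofReal, ← ENNReal.ofReal_mul hC]
  exact ENNReal.ofReal_le_ofReal (h x)

lemma sqNorm_add_le (f g : α → E) :
    sqNorm (fun x ↦ f x + g x) ≤ 2 * (sqNorm f + sqNorm g) := by
  have bound := sqNorm_le_of_enorm_le_tsum (f := fun x ↦ f x + g x) (u := ![f, g])
    (fun _ : Fin 2 ↦ 1) fun x ↦ by simpa [tsum_fintype] using enorm_add_le (f x) (g x)
  simpa [tsum_fintype, one_add_one_eq_two] using bound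

lemma sqNorm_le_four_mul_of_geometric {f : α → E} {u : ℕ → α → ℝ} {K : ℝ≥0∞}
    (hf : ∀ x, ‖f x‖ₑ ≤ ∑' j, ‖u j x‖ₑ)
    (hu : ∀ j, sqNorm (u j) ≤ ENNReal.ofReal (((1 / 2) ^ j) ^ 2) * K) :
    sqNorm f ≤ 4 * K := by
  let c (j : ℕ) : ℝ≥0∞ := 2⁻¹ ^ j
  have sum_c : ∑' j, c j = 2 := by
    rw [ENNReal.tsum_geometric, ENNReal.one_sub_inv_two, inv_inv]
  have rescale (j : ℕ) (x : α) : ‖u j x‖ₑ = c j * ‖(2 : ℝ) ^ j * u j x‖ₑ := by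
    rw [enorm_mul, enorm_pow, Real.enorm_of_nonneg two_pos.le, ENNReal.ofReal_ofNat, ← mul_assoc,
      ← mul_pow, ENNReal.inv_mul_cancel two_ne_zero ofNat_ne_top, one_pow, one_mul]
  have rescaled_le (j : ℕ) : sqNorm (fun x ↦ (2 : ℝ) ^ j * u j x) ≤ K := by
    rw [sqNorm_const_mul]
    calc ENNReal.ofReal ((2 ^ j) ^ 2) * sqNorm (u j)
        ≤ ENNReal.ofReal ((2 ^ j) ^ 2) * (ENNReal.ofReal (((1 / 2) ^ j) ^ 2) * K) := by
          gcongr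
          exact hu j
      _ = K := by
          rw [← mul_assoc, ← ENNReal.ofReal_mul (by positivity), ← mul_pow, ← mul_pow]
          norm_num
  calc sqNorm f ≤ (∑' j, c j) * ∑' j, c j * sqNorm (fun x ↦ (2 : ℝ) ^ j * u j x) :=
        sqNorm_le_of_enorm_le_tsum c fun x ↦ by simpa only [← rescale] using hf x
    _ ≤ (∑' j, c j) * ∑' j, c j * K := by
        gcongr with j
        exact rescaled_le j
    _ = 4 * K := by
        rw [ENNReal.tsum_mul_right, sum_c, ← mul_assoc]
        norm_num

end SqNorm

/-! ### Maximal averages along progressions -/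

/-- The average of `G` over the progression `x + q n`, `|n| < I`, normalised by `I` instead of the
number `2 I - 1` of its terms. -/
noncomputable def boxAverage (I q : ℕ) (G : ℤ → ℝ) (x : ℤ) : ℝ :=
  1 / I * ∑ n ∈ Ioo (-(I : ℤ)) I, G (x + q * n)

lemma boxAverage_nonneg (I q : ℕ) {G : ℤ → ℝ} (hG : ∀ x, 0 ≤ G x) (x : ℤ) :
    0 ≤ boxAverage I q G x :=
  mul_nonneg (by positivity) (sum_nonneg fun _ _ ↦ hG _)

lemma one_div_le_decayKernel {I : ℕ} {n : ℤ} (hn : |n| < I) :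
    1 / (I : ℝ) ≤ 4 * decayKernel I n := by
  have hn' : |(n : ℝ)| + 1 ≤ I := by exact_mod_cast hn
  have hpos := abs_nonneg (n : ℝ)
  have hI : (0 : ℝ) < I := by linarith
  rw [decayKernel, ← mul_div_assoc, div_le_div_iff₀ hI (by positivity)]
  nlinarith

lemma boxAverage_one_le_sum_decayKernel (I : ℕ) {G : ℤ → ℝ} (hG : ∀ x, 0 ≤ G x) (x : ℤ)
    {Y : Finset ℤ} (hY : Ioo (x - I) (x + I) ⊆ Y) :
    boxAverage I 1 G x ≤ 4 * ∑ z ∈ Y, decayKernel I (x - z) * G z := by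
  have shift : (Ioo (-(I : ℤ)) I).map (addLeftEmbedding x) = Ioo (x - I) (x + I) := by
    rw [map_add_left_Ioo, sub_eq_add_neg]
  calc boxAverage I 1 G x = ∑ z ∈ Ioo (x - I) (x + I), 1 / (I : ℝ) * G z := by
        rw [boxAverage, ← shift, sum_map, mul_sum]
        simp only [Nat.cast_one, one_mul, addLeftEmbedding_apply]
    _ ≤ ∑ z ∈ Ioo (x - I) (x + I), 4 * decayKernel I (x - z) * G z := by
        refine sum_le_sum fun z hz ↦ mul_le_mul_of_nonneg_right ?_ (hG z)
        rw [mem_Ioo] at hz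
        exact one_div_le_decayKernel (abs_lt.2 ⟨by linarith, by linarith⟩)
    _ ≤ ∑ z ∈ Y, 4 * decayKernel I (x - z) * G z :=
        sum_le_sum_of_subset_of_nonneg hY fun z _ _ ↦
          mul_nonneg (mul_nonneg (by norm_num) (decayKernel_nonneg _ _)) (hG z)
    _ = 4 * ∑ z ∈ Y, decayKernel I (x - z) * G z := by simp only [mul_sum, mul_assoc]

lemma sqNorm_boxAverage_one_le {N : ℤ → ℕ} (hN : ∀ x, 1 ≤ N x) {G : ℤ → ℝ}
    (hG : ∀ x, 0 ≤ G x) :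
    sqNorm (fun x ↦ boxAverage (N x) 1 G x) ≤ ENNReal.ofReal (128 ^ 2) * sqNorm G := by
  refine sqNorm_le_of_forall_finset (by positivity) fun X ↦ ?_
  let Y : Finset ℤ := X ∪ X.biUnion fun x ↦ Ioo (x - N x) (x + N x)
  let H : ℤ → ℝ := fun x ↦ ∑ z ∈ Y, decayKernel (N x) (x - z) * G z
  have box_le {x : ℤ} (hx : x ∈ X) : boxAverage (N x) 1 G x ≤ 4 * H x :=
    boxAverage_one_le_sum_decayKernel _ hG x
      ((subset_biUnion_of_mem (fun x ↦ Ioo (x - N x : ℤ) (x + N x)) hx).trans subset_union_right)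
  refine ⟨Y, ?_⟩
  simp only [Real.norm_eq_abs, sq_abs]
  calc ∑ x ∈ X, boxAverage (N x) 1 G x ^ 2 ≤ ∑ x ∈ X, (4 * H x) ^ 2 :=
        sum_le_sum fun x hx ↦ pow_le_pow_left₀ (boxAverage_nonneg _ _ hG x) (box_le hx) 2
    _ ≤ ∑ x ∈ Y, (4 * H x) ^ 2 :=
        sum_le_sum_of_subset_of_nonneg subset_union_left fun _ _ _ ↦ sq_nonneg _
    _ = 4 ^ 2 * ∑ x ∈ Y, H x ^ 2 := by simp only [mul_pow, mul_sum]
    _ ≤ 4 ^ 2 * (32 ^ 2 * ∑ x ∈ Y, G x ^ 2) := by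
        gcongr
        exact sum_sq_decayKernel_le Y hN G
    _ = 128 ^ 2 * ∑ x ∈ Y, G x ^ 2 := by ring

lemma tsum_int_eq_tsum_residue (q : ℕ) [NeZero q] (F : ℤ → ℝ≥0∞) :
    ∑' x, F x = ∑' r : Fin q, ∑' t : ℤ, F (r + q * t) := by
  rw [← (Int.divModEquiv q).symm.tsum_eq, ENNReal.tsum_prod', ENNReal.tsum_comm]
  refine tsum_congr fun r ↦ tsum_congr fun t ↦ congrArg F ?_
  simp only [Int.divModEquiv, Equiv.coe_fn_symm_mk]
  ring

theorem sqNorm_boxAverage_le {q : ℕ} (hq : 1 ≤ q) {N : ℤ → ℕ} (hN : ∀ x, 1 ≤ N x)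
    {G : ℤ → ℝ} (hG : ∀ x, 0 ≤ G x) :
    sqNorm (fun x ↦ boxAverage (N x) q G x) ≤ ENNReal.ofReal (128 ^ 2) * sqNorm G := by
  have : NeZero q := ⟨by omega⟩
  rw [sqNorm, sqNorm, tsum_int_eq_tsum_residue q,
    tsum_int_eq_tsum_residue q fun x ↦ ‖G x‖ₑ ^ 2, ← ENNReal.tsum_mul_left]
  refine ENNReal.tsum_le_tsum fun r ↦ ?_
  have box_residue (t : ℤ) : boxAverage (N (r + q * t)) q G (r + q * t) =
      boxAverage (N (r + q * t)) 1 (fun t ↦ G (r + q * t)) t := by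
    simp only [boxAverage, Nat.cast_one, one_mul, mul_add, add_assoc]
  simp only [box_residue]
  exact sqNorm_boxAverage_one_le (N := fun t : ℤ ↦ N (r + q * t)) (fun t ↦ hN _) fun t ↦ hG _

/-! ### The large sieve -/

section LargeSieve

open ComplexConjugate

lemma norm_geom_sum_le {z : ℂ} (hz : ‖z‖ ≤ 1) (hz1 : z ≠ 1) (N : ℕ) :
    ‖∑ j ∈ range N, z ^ j‖ ≤ 2 / ‖z - 1‖ := by
  rw [geom_sum_eq hz1, norm_div]
  gcongr
  calc ‖z ^ N - 1‖ ≤ ‖z‖ ^ N + ‖(1 : ℂ)‖ := by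
        rw [← norm_pow]
        exact norm_sub_le _ _
    _ ≤ 1 + 1 := by
        gcongr
        exacts [pow_le_one₀ (norm_nonneg z) hz, norm_one.le]
    _ = 2 := by norm_num

lemma norm_mul_conj_sub_one (z : ℂ) {w : ℂ} (hw : ‖w‖ = 1) : ‖z * conj w - 1‖ = ‖z - w‖ := by
  have hww : w * conj w = 1 := by simp [Complex.mul_conj', hw]
  calc ‖z * conj w - 1‖ = ‖(z - w) * conj w‖ := by rw [sub_mul, hww]
    _ = ‖z - w‖ := by rw [norm_mul, RCLike.norm_conj, hw, mul_one]

variable {s : Finset ℂ} {N : ℕ} {δ : ℝ}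

lemma sum_sq_norm_sum_pow_mul_eq (s : Finset ℂ) (N : ℕ) (b : ℂ → ℂ) :
    ((∑ j ∈ range N, ‖∑ z ∈ s, z ^ j * b z‖ ^ 2 : ℝ) : ℂ) =
      ∑ z ∈ s, ∑ w ∈ s, b z * conj (b w) * ∑ j ∈ range N, (z * conj w) ^ j := by
  push_cast
  simp only [← Complex.mul_conj', map_sum, sum_mul_sum]
  rw [sum_comm]
  refine sum_congr rfl fun z _ ↦ ?_
  rw [sum_comm]
  refine sum_congr rfl fun w _ ↦ ?_
  rw [mul_sum]
  refine sum_congr rfl fun j _ ↦ ?_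
  rw [map_mul, map_pow]
  ring

open Classical in
lemma norm_sum_mul_conj_pow_le {z w : ℂ} (hδ : 0 < δ) (hz : ‖z‖ = 1) (hw : ‖w‖ = 1)
    (separated : z ≠ w → δ ≤ ‖z - w‖) (N : ℕ) :
    ‖∑ j ∈ range N, (z * conj w) ^ j‖ ≤ (if z = w then (N : ℝ) else 0) + 2 / δ := by
  have norm_eq : ‖z * conj w‖ = 1 := by
    rw [norm_mul, RCLike.norm_conj, hz, hw, one_mul]
  split_ifs with h
  · calc ‖∑ j ∈ range N, (z * conj w) ^ j‖ ≤ ∑ j ∈ range N, ‖(z * conj w) ^ j‖ :=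
          norm_sum_le _ _
      _ = N := by simp only [norm_pow, norm_eq, one_pow, sum_const, card_range, nsmul_one]
      _ ≤ N + 2 / δ := by linarith [div_nonneg zero_le_two hδ.le]
  · have sep := separated h
    rw [← norm_mul_conj_sub_one z hw] at sep
    have hne : z * conj w ≠ 1 := fun h1 ↦ by
      rw [h1, sub_self, norm_zero] at sep
      exact hδ.not_ge sep
    rw [zero_add]
    exact (norm_geom_sum_le norm_eq.le hne N).trans (by gcongr)

lemma large_sieve_dual (hδ : 0 < δ) (unit : ∀ z ∈ s, ‖z‖ = 1)
    (separated : ∀ z ∈ s, ∀ w ∈ s, z ≠ w → δ ≤ ‖z - w‖) (hN : 2 * #s ≤ δ * N) (b : ℂ → ℂ) :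
    ∑ j ∈ range N, ‖∑ z ∈ s, z ^ j * b z‖ ^ 2 ≤ 2 * N * ∑ z ∈ s, ‖b z‖ ^ 2 := by
  classical
  calc ∑ j ∈ range N, ‖∑ z ∈ s, z ^ j * b z‖ ^ 2
      = ‖∑ z ∈ s, ∑ w ∈ s, b z * conj (b w) * ∑ j ∈ range N, (z * conj w) ^ j‖ := by
        rw [← sum_sq_norm_sum_pow_mul_eq, Complex.norm_of_nonneg]
        exact sum_nonneg fun _ _ ↦ by positivity
    _ ≤ ∑ z ∈ s, ∑ w ∈ s, ‖b z‖ * ‖b w‖ * ((if z = w then (N : ℝ) else 0) + 2 / δ) := by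
        refine norm_sum_le_of_le _ fun z hz ↦ norm_sum_le_of_le _ fun w hw ↦ ?_
        rw [norm_mul, norm_mul, RCLike.norm_conj]
        gcongr
        exact norm_sum_mul_conj_pow_le hδ (unit z hz) (unit w hw) (separated z hz w hw) N
    _ = N * ∑ z ∈ s, ‖b z‖ ^ 2 + 2 / δ * (∑ z ∈ s, ‖b z‖) ^ 2 := by
        simp only [mul_add, sum_add_distrib, mul_ite, mul_zero, sum_ite_eq, ← sum_mul,
          ← sum_mul_sum]
        congr 1
        · rw [mul_sum]
          exact sum_congr rfl fun z hz ↦ by rw [if_pos hz]; ring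
        · ring
    _ ≤ N * ∑ z ∈ s, ‖b z‖ ^ 2 + 2 / δ * (#s * ∑ z ∈ s, ‖b z‖ ^ 2) := by
        gcongr
        exact sq_sum_le_card_mul_sum_sq
    _ = (N + 2 * #s / δ) * ∑ z ∈ s, ‖b z‖ ^ 2 := by ring
    _ ≤ 2 * N * ∑ z ∈ s, ‖b z‖ ^ 2 := by
        rw [two_mul (N : ℝ)]
        gcongr
        rwa [div_le_iff₀ hδ, mul_comm (N : ℝ)]

lemma large_sieve_dual_of_norm_le (hδ : 0 < δ) (unit : ∀ z ∈ s, ‖z‖ = 1)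
    (separated : ∀ z ∈ s, ∀ w ∈ s, z ≠ w → δ ≤ ‖z - w‖) (hN : 2 * #s ≤ δ * N) {c : ℂ → ℂ}
    {ε : ℝ} (hc : ∀ z ∈ s, ‖c z‖ ≤ ε) (b : ℂ → ℂ) :
    ∑ j ∈ range N, ‖∑ z ∈ s, z ^ j * (c z * b z)‖ ^ 2 ≤
      2 * N * ε ^ 2 * ∑ z ∈ s, ‖b z‖ ^ 2 := by
  calc ∑ j ∈ range N, ‖∑ z ∈ s, z ^ j * (c z * b z)‖ ^ 2
      ≤ 2 * N * ∑ z ∈ s, ‖c z * b z‖ ^ 2 := large_sieve_dual hδ unit separated hN _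
    _ ≤ 2 * N * ∑ z ∈ s, ε ^ 2 * ‖b z‖ ^ 2 := by
        gcongr with z hz
        rw [norm_mul, mul_pow]
        gcongr
        exact hc z hz
    _ = 2 * N * ε ^ 2 * ∑ z ∈ s, ‖b z‖ ^ 2 := by rw [← mul_sum, mul_assoc (2 * (N : ℝ))]

theorem large_sieve (hδ : 0 < δ) (unit : ∀ z ∈ s, ‖z‖ = 1)
    (separated : ∀ z ∈ s, ∀ w ∈ s, z ≠ w → δ ≤ ‖z - w‖) (hN : 2 * #s ≤ δ * N) (a : ℕ → ℂ) :
    ∑ z ∈ s, ‖∑ j ∈ range N, z ^ j * a j‖ ^ 2 ≤ 2 * N * ∑ j ∈ range N, ‖a j‖ ^ 2 :=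
  sum_sq_norm_transpose_le s (range N) (fun z j ↦ z ^ j) (by positivity)
    (large_sieve_dual hδ unit separated hN) a

end LargeSieve

/-! ### Double averages -/

/-- The average over `i < N` and `j < M` of `g (i - j) * f (x + (i - j))`: a smoothed average of
translates of `f` with weight `g`, factoring into an analysis and a synthesis operator when `g` is
a trigonometric polynomial. -/
noncomputable def doubleAverage (N M : ℕ) (g f : ℤ → ℝ) (x : ℤ) : ℝ :=
  1 / ((N : ℝ) * M) * ∑ i ∈ range N, ∑ j ∈ range M, g (i - j) * f (x + (i - j))

/-- The average over `j < M` of `f (y - j) * z ^ (-j)`, a local Fourier coefficient of `f`. -/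
noncomputable def localFourier (M : ℕ) (f : ℤ → ℝ) (z : ℂ) (y : ℤ) : ℂ :=
  1 / (M : ℂ) * ∑ j ∈ range M, z ^ (-(j : ℤ)) * f (y - j)

lemma doubleAverage_eq_sum_localFourier {s : Finset ℂ} (hs : ∀ z ∈ s, z ≠ 0) (N M : ℕ)
    {c : ℂ → ℂ} {g : ℤ → ℝ} (hg : ∀ n, (g n : ℂ) = ∑ z ∈ s, c z * z ^ n) (f : ℤ → ℝ) (x : ℤ) :
    (doubleAverage N M g f x : ℂ) =
      ∑ i ∈ range N, (1 / N : ℝ) • ∑ z ∈ s, z ^ i * (c z * localFourier M f z (x + i)) := by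
  simp only [doubleAverage, localFourier, Complex.real_smul]
  push_cast
  rw [mul_sum]
  refine sum_congr rfl fun i _ ↦ ?_
  simp only [hg, mul_sum, sum_mul]
  rw [sum_comm]
  refine sum_congr rfl fun z hz ↦ sum_congr rfl fun j _ ↦ ?_
  rw [zpow_sub₀ (hs z hz), zpow_natCast, zpow_neg, add_sub]
  field_simp

section Bound

variable {s : Finset ℂ} {N M : ℕ} {δ : ℝ}

lemma sum_sqNorm_localFourier_le (hM : 1 ≤ M) (hδ : 0 < δ) (unit : ∀ z ∈ s, ‖z‖ = 1)
    (separated : ∀ z ∈ s, ∀ w ∈ s, z ≠ w → δ ≤ ‖z - w‖) (hδM : 2 * #s ≤ δ * M) (f : ℤ → ℝ) :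
    ∑ z ∈ s, sqNorm (localFourier M f z) ≤ 2 * sqNorm f := by
  have hM' : (0 : ℝ) < M := by exact_mod_cast hM
  have norm_localFourier {z : ℂ} (hz : z ∈ s) (y : ℤ) :
      ‖localFourier M f z y‖ = 1 / M * ‖∑ j ∈ range M, z ^ j * (f (y - j) : ℂ)‖ := by
    rw [localFourier, norm_mul, ← RCLike.norm_conj (∑ j ∈ range M, _), map_sum]
    simp [← Complex.inv_eq_conj (unit z hz)]
  have pointwise (y : ℤ) : ∑ z ∈ s, ‖localFourier M f z y‖ ^ 2 ≤
      2 / M * ∑ j ∈ range M, ‖f (y - j)‖ ^ 2 := by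
    calc ∑ z ∈ s, ‖localFourier M f z y‖ ^ 2
        = (1 / M) ^ 2 * ∑ z ∈ s, ‖∑ j ∈ range M, z ^ j * (f (y - j) : ℂ)‖ ^ 2 := by
          rw [mul_sum]
          exact sum_congr rfl fun z hz ↦ by rw [norm_localFourier hz, mul_pow]
      _ ≤ (1 / M) ^ 2 * (2 * M * ∑ j ∈ range M, ‖(f (y - j) : ℂ)‖ ^ 2) := by
          gcongr
          exact large_sieve hδ unit separated hδM _
      _ = 2 / M * ∑ j ∈ range M, ‖f (y - j)‖ ^ 2 := by
          simp only [Complex.norm_real]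
          field_simp
  have translates (j : ℕ) : sqNorm (fun y ↦ f (y - j)) = sqNorm f :=
    sqNorm_comp_equiv (Equiv.subRight (j : ℤ)) f
  calc ∑ z ∈ s, sqNorm (localFourier M f z)
      ≤ ENNReal.ofReal (2 / M) * ∑ j ∈ range M, sqNorm (fun y ↦ f (y - j)) :=
        sum_sqNorm_le_of_forall_sum_sq_le (by positivity) pointwise
    _ = ENNReal.ofReal (2 / M * M) * sqNorm f := by
        simp only [translates, sum_const, card_range, nsmul_eq_mul]
        rw [ENNReal.ofReal_mul (by positivity), ENNReal.ofReal_natCast, mul_assoc]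
    _ = 2 * sqNorm f := by rw [div_mul_cancel₀ _ hM'.ne', ENNReal.ofReal_ofNat]

theorem sqNorm_doubleAverage_le (hN : 1 ≤ N) (hM : 1 ≤ M) (hδ : 0 < δ)
    (unit : ∀ z ∈ s, ‖z‖ = 1) (separated : ∀ z ∈ s, ∀ w ∈ s, z ≠ w → δ ≤ ‖z - w‖)
    (hδN : 2 * #s ≤ δ * N) (hδM : 2 * #s ≤ δ * M) {c : ℂ → ℂ} {ε : ℝ}
    (hc : ∀ z ∈ s, ‖c z‖ ≤ ε) {g : ℤ → ℝ} (hg : ∀ n, (g n : ℂ) = ∑ z ∈ s, c z * z ^ n)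
    (f : ℤ → ℝ) :
    sqNorm (doubleAverage N M g f) ≤ ENNReal.ofReal (4 * ε ^ 2) * sqNorm f := by
  have hN' : (0 : ℝ) < N := by exact_mod_cast hN
  have hs {z : ℂ} (hz : z ∈ s) : z ≠ 0 := norm_pos_iff.1 (by rw [unit z hz]; norm_num)
  let G : ℕ → ℤ → ℂ := fun i y ↦ ∑ z ∈ s, z ^ i * (c z * localFourier M f z y)
  have translates (i : ℕ) : sqNorm (fun x ↦ G i (x + i)) = sqNorm (G i) :=
    sqNorm_comp_equiv (Equiv.addRight (i : ℤ)) (G i)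
  calc sqNorm (doubleAverage N M g f)
      ≤ sqNorm (fun x ↦ ∑ i ∈ range N, (1 / N : ℝ) • G i (x + i)) := by
        refine sqNorm_mono fun x ↦ ?_
        rw [← doubleAverage_eq_sum_localFourier (fun z hz ↦ hs hz) N M hg f x, Complex.norm_real]
    _ ≤ ENNReal.ofReal (∑ _i ∈ range N, 1 / (N : ℝ)) *
          ∑ i ∈ range N, ENNReal.ofReal (1 / N) * sqNorm (fun x ↦ G i (x + i)) :=
        sqNorm_sum_smul_le _ (fun _ _ ↦ by positivity) fun i x ↦ G i (x + i)
    _ = ENNReal.ofReal (1 / N) * ∑ i ∈ range N, sqNorm (G i) := by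
        simp only [translates, ← mul_sum, sum_const, card_range, nsmul_eq_mul]
        rw [mul_one_div_cancel hN'.ne', ENNReal.ofReal_one, one_mul]
    _ ≤ ENNReal.ofReal (1 / N) *
          (ENNReal.ofReal (2 * N * ε ^ 2) * ∑ z ∈ s, sqNorm (localFourier M f z)) := by
        gcongr
        exact sum_sqNorm_le_of_forall_sum_sq_le (by positivity) fun y ↦
          large_sieve_dual_of_norm_le hδ unit separated hδN hc fun z ↦ localFourier M f z y
    _ ≤ ENNReal.ofReal (1 / N) * (ENNReal.ofReal (2 * N * ε ^ 2) * (2 * sqNorm f)) := by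
        gcongr
        exact sum_sqNorm_localFourier_le hM hδ unit separated hδM f
    _ = ENNReal.ofReal (4 * ε ^ 2) * sqNorm f := by
        rw [← ENNReal.ofReal_ofNat 2, ← mul_assoc, ← mul_assoc,
          ← ENNReal.ofReal_mul (by positivity), ← ENNReal.ofReal_mul (by positivity)]
        congr 2
        field_simp
        ring

end Bound

lemma doubleAverage_nonneg (N M : ℕ) {g f : ℤ → ℝ} (hg : ∀ n, 0 ≤ g n) (hf : ∀ n, 0 ≤ f n)
    (x : ℤ) : 0 ≤ doubleAverage N M g f x :=
  mul_nonneg (by positivity) <| sum_nonneg fun _ _ ↦ sum_nonneg fun _ _ ↦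
    mul_nonneg (hg _) (hf _)

lemma doubleAverage_sum {ι : Type*} (s : Finset ι) (N M : ℕ) (g : ι → ℤ → ℝ) (f : ℤ → ℝ)
    (x : ℤ) :
    doubleAverage N M (fun n ↦ ∑ l ∈ s, g l n) f x = ∑ l ∈ s, doubleAverage N M (g l) f x := by
  simp only [doubleAverage, ← mul_sum, sum_mul]
  rw [sum_comm (s := s)]
  exact congrArg _ (sum_congr rfl fun i _ ↦ sum_comm)

lemma doubleAverage_add (N M : ℕ) (g h f : ℤ → ℝ) (x : ℤ) :
    doubleAverage N M (fun n ↦ g n + h n) f x =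
      doubleAverage N M g f x + doubleAverage N M h f x := by
  simp only [doubleAverage, ← mul_add, ← sum_add_distrib, add_mul]

lemma sum_range_mul_eq {α : Type*} [AddCommMonoid α] (I m : ℕ) (f : ℕ → α) :
    ∑ i ∈ range (I * m), f i = ∑ b ∈ range I, ∑ i ∈ range m, f (b * m + i) := by
  induction I with
  | zero => simp
  | succ I ih => rw [Nat.succ_mul, sum_range_add, ih, sum_range_succ]

lemma doubleAverage_mul_eq_of_periodic {m : ℕ} (I J : ℕ) {g : ℤ → ℝ}
    (hg : Function.Periodic g m) (f : ℤ → ℝ) (x : ℤ) :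
    doubleAverage (I * m) (J * m) g f x =
      1 / ((I : ℝ) * J) * ∑ b ∈ range I, ∑ b' ∈ range J,
        doubleAverage m m g f (x + m * (b - b')) := by
  simp only [doubleAverage, ← mul_sum, sum_range_mul_eq, ← mul_assoc]
  congr 1
  · push_cast
    ring
  refine sum_congr rfl fun b _ ↦ ?_
  rw [sum_comm (s := range J)]
  refine sum_congr rfl fun i _ ↦ sum_congr rfl fun b' _ ↦ sum_congr rfl fun j _ ↦ ?_
  have split : ((b * m + i : ℕ) : ℤ) - (b' * m + j : ℕ) = i - j + (b - b' : ℤ) * m := by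
    push_cast
    ring
  have periodic : g (i - j + (b - b' : ℤ) * m) = g (i - j) := by
    simpa using hg.int_mul (b - b') (i - j)
  rw [split, periodic]
  congr 2
  ring

lemma abs_doubleAverage_mul_le_boxAverage {m I J : ℕ} (hJ : 1 ≤ J) (hJI : J ≤ I) {g : ℤ → ℝ}
    (hg : Function.Periodic g m) (f : ℤ → ℝ) (x : ℤ) :
    |doubleAverage (I * m) (J * m) g f x| ≤
      boxAverage I m (fun y ↦ |doubleAverage m m g f y|) x := by
  have hI' : (0 : ℝ) < I := by exact_mod_cast hJ.trans hJI
  let D : ℤ → ℝ := fun n ↦ |doubleAverage m m g f (x + m * n)|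
  have row_le {b' : ℕ} (hb' : b' < J) :
      ∑ b ∈ range I, D (b - b') ≤ ∑ n ∈ Ioo (-(I : ℤ)) I, D n := by
    have hinj : Set.InjOn (fun b : ℕ ↦ (b : ℤ) - b') (range I) := fun a _ b _ h ↦ by
      simpa using h
    rw [← sum_image (f := D) hinj]
    refine sum_le_sum_of_subset_of_nonneg (fun n hn ↦ ?_) fun _ _ _ ↦ abs_nonneg _
    obtain ⟨b, hb, rfl⟩ := mem_image.1 hn
    rw [mem_range] at hb
    rw [mem_Ioo]
    omega
  calc |doubleAverage (I * m) (J * m) g f x|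
      ≤ 1 / ((I : ℝ) * J) * ∑ b' ∈ range J, ∑ b ∈ range I, D (b - b') := by
        rw [doubleAverage_mul_eq_of_periodic I J hg, sum_comm, abs_mul,
          abs_of_nonneg (by positivity)]
        gcongr
        exact (abs_sum_le_sum_abs _ _).trans (sum_le_sum fun _ _ ↦ abs_sum_le_sum_abs _ _)
    _ ≤ 1 / ((I : ℝ) * J) * ∑ _b' ∈ range J, ∑ n ∈ Ioo (-(I : ℤ)) I, D n := by
        gcongr with b' hb'
        exact row_le (mem_range.1 hb')
    _ = boxAverage I m (fun y ↦ |doubleAverage m m g f y|) x := by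
        rw [sum_const, card_range, nsmul_eq_mul, boxAverage]
        field_simp
        rfl

lemma mul_sum_le_mul_doubleAverage {N M L : ℕ} (hM : 1 ≤ M) (hL : N + M ≤ L) {ν F : ℤ → ℝ}
    (hν : ∀ n, 0 ≤ ν n) (hF : ∀ n, 0 ≤ F n) {S : Finset ℕ} (hS : ∀ p ∈ S, p ≤ N) {c : ℝ}
    (hc : ∀ p ∈ S, c ≤ ν p) (x : ℤ) :
    c * ∑ p ∈ S, F (x + p) ≤ L * doubleAverage L M ν F x := by
  have hM' : (0 : ℝ) < M := by exact_mod_cast hM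
  have hL' : (0 : ℝ) < L := by exact_mod_cast (by omega : 0 < L)
  let D : ℤ → ℝ := fun n ↦ ν n * F (x + n)
  have D_nonneg (n : ℤ) : 0 ≤ D n := mul_nonneg (hν _) (hF _)
  have column_le {j : ℕ} (hj : j < M) :
      c * ∑ p ∈ S, F (x + p) ≤ ∑ i ∈ range L, D (i - j) := by
    calc c * ∑ p ∈ S, F (x + p) ≤ ∑ p ∈ S, D p := by
          rw [mul_sum]
          exact sum_le_sum fun p hp ↦ mul_le_mul_of_nonneg_right (hc p hp) (hF _)
      _ = ∑ i ∈ S.map (addRightEmbedding j), D (i - j) := by simp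
      _ ≤ ∑ i ∈ range L, D (i - j) := by
          refine sum_le_sum_of_subset_of_nonneg (fun i hi ↦ ?_) fun _ _ _ ↦ D_nonneg _
          obtain ⟨p, hp, rfl⟩ := mem_map.1 hi
          have := hS p hp
          rw [mem_range, addRightEmbedding_apply]
          omega
  have sum_columns : M * (c * ∑ p ∈ S, F (x + p)) ≤
      ∑ i ∈ range L, ∑ j ∈ range M, D (i - j) := by
    rw [sum_comm, ← nsmul_eq_mul, ← card_range M, ← sum_const, card_range]
    exact sum_le_sum fun j hj ↦ column_le (mem_range.1 hj)
  calc c * ∑ p ∈ S, F (x + p) ≤ (∑ i ∈ range L, ∑ j ∈ range M, D (i - j)) / M := by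
        rwa [le_div_iff₀' hM']
    _ = L * doubleAverage L M ν F x := by
        rw [doubleAverage]
        field_simp
        rfl

/-! ### Ramanujan sums -/

lemma sum_zpow_nthRootsFinset {q : ℕ} (hq : 0 < q) (n : ℤ) :
    ∑ z ∈ Polynomial.nthRootsFinset q (1 : ℂ), z ^ n = if (q : ℤ) ∣ n then (q : ℂ) else 0 := by
  obtain ⟨ζ, hζ⟩ : ∃ ζ : ℂ, IsPrimitiveRoot ζ q := ⟨_, Complex.isPrimitiveRoot_exp q hq.ne'⟩
  split_ifs with h
  · obtain ⟨m, rfl⟩ := h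
    have all_one {z : ℂ} (hz : z ∈ Polynomial.nthRootsFinset q (1 : ℂ)) :
        z ^ (q * m : ℤ) = 1 := by
      rw [zpow_mul, zpow_natCast, (Polynomial.mem_nthRootsFinset hq 1).1 hz, one_zpow]
    rw [sum_congr rfl fun z hz ↦ all_one hz, sum_const, hζ.card_nthRootsFinset, nsmul_one]
  · have rotate : ∑ z ∈ Polynomial.nthRootsFinset q (1 : ℂ), z ^ n =
        ζ ^ n * ∑ z ∈ Polynomial.nthRootsFinset q (1 : ℂ), z ^ n := by
      rw [mul_sum]
      refine (sum_equiv (Equiv.mulLeft₀ ζ (hζ.ne_zero hq.ne')) (fun z ↦ ?_) fun z _ ↦ ?_).symm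
      · simp [Polynomial.mem_nthRootsFinset hq, mul_pow, hζ.pow_eq_one]
      · rw [Equiv.mulLeft₀_apply, mul_zpow]
    exact (mul_left_eq_self₀.1 rotate.symm).resolve_left fun h1 ↦
      h ((hζ.zpow_eq_one_iff_dvd n).1 h1)

/-- The Ramanujan sum `c_q(n)`, as an arithmetic function of the modulus `q`. -/
noncomputable def ramanujanSum (n : ℤ) : ArithmeticFunction ℂ :=
  ⟨fun q ↦ ∑ z ∈ primitiveRoots q ℂ, z ^ n, by simp⟩

/-- The arithmetic function `q ↦ q` restricted to the divisors of `n`. -/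
noncomputable def idOnDivisors (n : ℤ) : ArithmeticFunction ℂ :=
  ⟨fun q ↦ if (q : ℤ) ∣ n then (q : ℂ) else 0, by simp⟩

lemma ramanujanSum_apply (n : ℤ) (q : ℕ) :
    ramanujanSum n q = ∑ z ∈ primitiveRoots q ℂ, z ^ n := rfl

lemma idOnDivisors_apply (n : ℤ) (q : ℕ) :
    idOnDivisors n q = if (q : ℤ) ∣ n then (q : ℂ) else 0 := rfl

lemma isMultiplicative_idOnDivisors (n : ℤ) : (idOnDivisors n).IsMultiplicative := by
  refine ⟨by simp [idOnDivisors_apply], fun {a b} hab ↦ ?_⟩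
  have dvd_iff : ((a * b : ℕ) : ℤ) ∣ n ↔ (a : ℤ) ∣ n ∧ (b : ℤ) ∣ n := by
    simp only [Int.natCast_dvd]
    exact ⟨fun h ↦ ⟨dvd_of_mul_right_dvd h, dvd_of_mul_left_dvd h⟩,
      fun h ↦ hab.mul_dvd_of_dvd_of_dvd h.1 h.2⟩
  rw [idOnDivisors_apply, if_congr dvd_iff rfl rfl, Nat.cast_mul, idOnDivisors_apply,
    idOnDivisors_apply, ite_zero_mul_ite_zero]

open ArithmeticFunction in
lemma ramanujanSum_eq_moebius_mul (n : ℤ) :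
    ramanujanSum n = (moebius : ArithmeticFunction ℂ) * idOnDivisors n := by
  have zeta_mul : (zeta : ArithmeticFunction ℂ) * ramanujanSum n = idOnDivisors n := by
    ext q
    rcases q.eq_zero_or_pos with rfl | hq
    · simp
    have : NeZero q := ⟨hq.ne'⟩
    rw [coe_zeta_mul_apply, idOnDivisors_apply, ← sum_zpow_nthRootsFinset hq,
      IsPrimitiveRoot.nthRoots_one_eq_biUnion_primitiveRoots,
      sum_biUnion fun a _ b _ hab ↦ IsPrimitiveRoot.disjoint hab]
    rfl
  rw [← zeta_mul, ← mul_assoc, coe_moebius_mul_coe_zeta, one_mul]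

lemma isMultiplicative_ramanujanSum (n : ℤ) : (ramanujanSum n).IsMultiplicative := by
  rw [ramanujanSum_eq_moebius_mul]
  exact ArithmeticFunction.isMultiplicative_moebius.intCast.mul (isMultiplicative_idOnDivisors n)

lemma ramanujanSum_prime {p : ℕ} (hp : p.Prime) (n : ℤ) :
    ramanujanSum n p = if (p : ℤ) ∣ n then (p : ℂ) - 1 else -1 := by
  rw [ramanujanSum_eq_moebius_mul, ArithmeticFunction.mul_apply,
    Nat.sum_divisorsAntidiagonal fun i j ↦
      (ArithmeticFunction.moebius : ArithmeticFunction ℂ) i * idOnDivisors n j, hp.sum_divisors]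
  simp only [idOnDivisors_apply, ArithmeticFunction.intCoe_apply,
    ArithmeticFunction.moebius_apply_prime hp, ArithmeticFunction.moebius_apply_one]
  simp only [Nat.div_self hp.pos, Nat.cast_one, isUnit_one, IsUnit.dvd, ↓reduceIte, mul_one,
    Int.reduceNeg, Int.cast_neg, Int.cast_one, Nat.div_one, one_mul]
  split_ifs <;> ring

/-- The roots of unity of order at most `D`, i.e. the Farey fractions of order `D` on the circle. -/
noncomputable def fareyRoots (D : ℕ) : Finset ℂ := (Icc 1 D).biUnion fun q ↦ primitiveRoots q ℂ

lemma exists_pow_eq_one_of_mem_fareyRoots {D : ℕ} {z : ℂ} (hz : z ∈ fareyRoots D) :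
    ∃ q, 1 ≤ q ∧ q ≤ D ∧ z ^ q = 1 := by
  obtain ⟨q, hq, hzq⟩ := mem_biUnion.1 hz
  rw [mem_Icc] at hq
  exact ⟨q, hq.1, hq.2, (isPrimitiveRoot_of_mem_primitiveRoots hzq).pow_eq_one⟩

lemma norm_eq_one_of_mem_fareyRoots {D : ℕ} {z : ℂ} (hz : z ∈ fareyRoots D) : ‖z‖ = 1 := by
  obtain ⟨q, hq, -, h⟩ := exists_pow_eq_one_of_mem_fareyRoots hz
  exact Complex.norm_eq_one_of_pow_eq_one h (by omega)

lemma card_fareyRoots_le (D : ℕ) : #(fareyRoots D) ≤ D ^ 2 := by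
  calc #(fareyRoots D) ≤ ∑ q ∈ Icc 1 D, #(primitiveRoots q ℂ) := card_biUnion_le
    _ ≤ ∑ _q ∈ Icc 1 D, D := sum_le_sum fun q hq ↦ by
        rw [Complex.card_primitiveRoots]
        exact (Nat.totient_le q).trans (mem_Icc.1 hq).2
    _ = D ^ 2 := by simp [pow_two]

lemma two_le_mul_norm_sub_one_of_pow_eq_one {u : ℂ} {m : ℕ} (hm : 0 < m) (hum : u ^ m = 1)
    (hu : u ≠ 1) : 2 ≤ m * ‖u - 1‖ := by
  have hm' : (0 : ℝ) < m := by exact_mod_cast hm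
  have norm_u : ‖u‖ = 1 := Complex.norm_eq_one_of_pow_eq_one hum hm.ne'
  have norm_pow_sub_one_le (j : ℕ) : ‖u ^ j - 1‖ ≤ j * ‖u - 1‖ := by
    rw [← geom_sum_mul, norm_mul]
    gcongr
    simpa [norm_u] using norm_sum_le (range j) fun i ↦ u ^ i
  have sum_id_le : ((∑ j ∈ range m, j : ℕ) : ℝ) * 2 ≤ m * m := by
    exact_mod_cast (sum_range_id_mul_two m).trans_le (Nat.mul_le_mul_left m (Nat.sub_le m 1))
  have sum_zero : ∑ j ∈ range m, u ^ j = 0 := by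
    rw [geom_sum_eq hu, hum, sub_self, zero_div]
  have sum_le : (m : ℝ) ≤ (∑ j ∈ range m, j : ℕ) * ‖u - 1‖ := by
    calc (m : ℝ) = ‖∑ j ∈ range m, (u ^ j - 1)‖ := by simp [sum_zero]
      _ ≤ ∑ j ∈ range m, j * ‖u - 1‖ := norm_sum_le_of_le _ fun j _ ↦ norm_pow_sub_one_le j
      _ = (∑ j ∈ range m, j : ℕ) * ‖u - 1‖ := by rw [Nat.cast_sum, sum_mul]
  nlinarith [norm_nonneg (u - 1)]

lemma fareyRoots_separated {D : ℕ} {z w : ℂ} (hz : z ∈ fareyRoots D) (hw : w ∈ fareyRoots D)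
    (hzw : z ≠ w) : 2 / (D : ℝ) ^ 2 ≤ ‖z - w‖ := by
  obtain ⟨q, hq, hqD, hzq⟩ := exists_pow_eq_one_of_mem_fareyRoots hz
  obtain ⟨r, hr, hrD, hwr⟩ := exists_pow_eq_one_of_mem_fareyRoots hw
  have norm_w := norm_eq_one_of_mem_fareyRoots hw
  have hw0 : w ≠ 0 := norm_ne_zero_iff.1 (by rw [norm_w]; exact one_ne_zero)
  have order : (z / w) ^ (q * r) = 1 := by
    rw [div_pow, pow_mul, hzq, one_pow, mul_comm q r, pow_mul w, hwr, one_pow, div_one]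
  have lower := two_le_mul_norm_sub_one_of_pow_eq_one (Nat.mul_pos hq hr) order
    (div_ne_one_of_ne hzw)
  have norm_eq : ‖z / w - 1‖ = ‖z - w‖ := by
    rw [div_sub_one hw0, norm_div, norm_w, div_one]
  rw [norm_eq] at lower
  have hD : (0 : ℝ) < D := by exact_mod_cast (by omega : 0 < D)
  rw [div_le_iff₀' (by positivity), pow_two]
  refine lower.trans (mul_le_mul_of_nonneg_right ?_ (norm_nonneg _))
  exact_mod_cast Nat.mul_le_mul hqD hrD

theorem sqNorm_doubleAverage_le_of_ramanujanSum {D N M : ℕ} (hD : 1 ≤ D) (hN : D ^ 4 ≤ N)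
    (hM : D ^ 4 ≤ M) {c : ℕ → ℝ} {ε : ℝ} (hc : ∀ q, |c q| ≤ ε) {g : ℤ → ℝ}
    (hg : ∀ n, (g n : ℂ) = ∑ q ∈ Icc 1 D, c q * ramanujanSum n q) (f : ℤ → ℝ) :
    sqNorm (doubleAverage N M g f) ≤ ENNReal.ofReal (4 * ε ^ 2) * sqNorm f := by
  have hD4 : 1 ≤ D ^ 4 := Nat.one_le_pow _ _ hD
  have card_le {L : ℕ} (hL : D ^ 4 ≤ L) : 2 * #(fareyRoots D) ≤ 2 / (D : ℝ) ^ 2 * L := by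
    have hcard : (#(fareyRoots D) : ℝ) ≤ D ^ 2 := by exact_mod_cast card_fareyRoots_le D
    have hL' : (D : ℝ) ^ 4 ≤ L := by exact_mod_cast hL
    calc 2 * (#(fareyRoots D) : ℝ) ≤ 2 * D ^ 2 := by gcongr
      _ = 2 / (D : ℝ) ^ 2 * D ^ 4 := by field_simp
      _ ≤ 2 / (D : ℝ) ^ 2 * L := by gcongr
  refine sqNorm_doubleAverage_le (s := fareyRoots D) (δ := 2 / (D : ℝ) ^ 2)
    (c := fun z ↦ (c (orderOf z) : ℂ)) (hD4.trans hN) (hD4.trans hM) (by positivity)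
    (fun z ↦ norm_eq_one_of_mem_fareyRoots) (fun z hz w hw ↦ fareyRoots_separated hz hw)
    (card_le hN) (card_le hM) (fun z _ ↦ ?_) (fun n ↦ ?_) f
  · rw [Complex.norm_real]
    exact hc _
  · rw [hg, fareyRoots, sum_biUnion fun a _ b _ hab ↦ IsPrimitiveRoot.disjoint hab]
    refine sum_congr rfl fun q _ ↦ ?_
    rw [ramanujanSum_apply, mul_sum]
    refine sum_congr rfl fun z hz ↦ ?_
    rw [← (isPrimitiveRoot_of_mem_primitiveRoots hz).eq_orderOf]

/-! ### Products of local factors -/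

/-- The normalised Ramanujan sum `-c_p(n) / φ(p)` at a prime `p`. -/
noncomputable def localFactor (p : ℕ) (n : ℤ) : ℝ := if (p : ℤ) ∣ n then -1 else 1 / ((p : ℝ) - 1)

/-- The product of the local factors at the primes in `S`. -/
noncomputable def localProd (S : Finset ℕ) (n : ℤ) : ℝ := ∏ p ∈ S, localFactor p n

/-- The inverse of Euler's totient at the product of the primes in `S`. -/
noncomputable def invTotient (S : Finset ℕ) : ℝ := ∏ p ∈ S, 1 / ((p : ℝ) - 1)

section LocalProd

variable {P S : Finset ℕ}

lemma localProd_eq_ramanujanSum (hS : ∀ p ∈ S, p.Prime) (n : ℤ) :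
    (localProd S n : ℂ) =
      (((-1) ^ #S * invTotient S : ℝ) : ℂ) * ramanujanSum n (∏ p ∈ S, p) := by
  rw [(isMultiplicative_ramanujanSum n).map_prod_of_prime S hS, localProd, invTotient,
    ← prod_const, ← prod_mul_distrib]
  push_cast
  rw [← prod_mul_distrib]
  refine prod_congr rfl fun p hp ↦ ?_
  have hp1 : (p : ℂ) - 1 ≠ 0 := by
    rw [sub_ne_zero]
    exact_mod_cast (hS p hp).ne_one
  rw [ramanujanSum_prime (hS p hp), localFactor]
  split_ifs <;> (push_cast; field_simp)

lemma one_div_sub_one_nonneg {p : ℕ} (hp : p.Prime) : 0 ≤ 1 / ((p : ℝ) - 1) :=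
  one_div_nonneg.2 (sub_nonneg.2 (by exact_mod_cast hp.one_le))

lemma invTotient_nonneg (hS : ∀ p ∈ S, p.Prime) : 0 ≤ invTotient S :=
  prod_nonneg fun p hp ↦ one_div_sub_one_nonneg (hS p hp)

theorem sqNorm_doubleAverage_le_of_localProd (hP : ∀ p ∈ P, p.Prime) {D N M : ℕ} (hD : 1 ≤ D)
    (hN : D ^ 4 ≤ N) (hM : D ^ 4 ≤ M) {e : Finset ℕ → ℝ} {ε : ℝ} (hε : 0 ≤ ε)
    (support : ∀ S ⊆ P, e S ≠ 0 → ∏ p ∈ S, p ≤ D) (he : ∀ S ⊆ P, |e S| * invTotient S ≤ ε)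
    (f : ℤ → ℝ) :
    sqNorm (doubleAverage N M (fun n ↦ ∑ S ∈ P.powerset, e S * localProd S n) f) ≤
      ENNReal.ofReal (4 * ε ^ 2) * sqNorm f := by
  let F := {S ∈ P.powerset | e S ≠ 0}
  have subset {S : Finset ℕ} (hS : S ∈ F) : S ⊆ P := mem_powerset.1 (mem_filter.1 hS).1
  have prime {S : Finset ℕ} (hS : S ∈ F) : ∀ p ∈ S, p.Prime := fun p hp ↦ hP p (subset hS hp)
  let a : Finset ℕ → ℝ := fun S ↦ e S * ((-1) ^ #S * invTotient S)
  let c : ℕ → ℝ := fun q ↦ ∑ S ∈ F with ∏ p ∈ S, p = q, a S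
  refine sqNorm_doubleAverage_le_of_ramanujanSum hD hN hM (c := c) (fun q ↦ ?_) (fun n ↦ ?_) f
  · have unique : ({S ∈ F | ∏ p ∈ S, p = q}) ⊆ {q.primeFactors} := fun S hS ↦ by
      rw [mem_filter] at hS
      rw [mem_singleton, ← hS.2, Nat.primeFactors_prod (prime hS.1)]
    rcases subset_singleton_iff.1 unique with h | h
    · simpa only [c, h, sum_empty, abs_zero] using hε
    · have hq : q.primeFactors ∈ F :=
        (mem_filter.1 (h.symm ▸ mem_singleton_self q.primeFactors)).1
      simp only [c, a, h, sum_singleton, abs_mul, abs_pow, abs_neg, abs_one, one_pow, one_mul,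
        abs_of_nonneg (invTotient_nonneg (prime hq))]
      exact he _ (subset hq)
  · have range_le {S : Finset ℕ} (hS : S ∈ F) : ∏ p ∈ S, p ∈ Icc 1 D :=
      mem_Icc.2 ⟨prod_pos fun p hp ↦ (prime hS p hp).pos,
        support S (subset hS) (mem_filter.1 hS).2⟩
    have drop_zero : ∑ S ∈ P.powerset, e S * localProd S n = ∑ S ∈ F, e S * localProd S n :=
      (sum_filter_of_ne fun S _ h ↦ left_ne_zero_of_mul h).symm
    rw [drop_zero, Complex.ofReal_sum, ← sum_fiberwise_of_maps_to fun S hS ↦ range_le hS]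
    refine sum_congr rfl fun q _ ↦ ?_
    simp only [c]
    rw [Complex.ofReal_sum, sum_mul]
    refine sum_congr rfl fun S hS ↦ ?_
    obtain ⟨hSF, rfl⟩ := mem_filter.1 hS
    rw [Complex.ofReal_mul, localProd_eq_ramanujanSum (prime hSF)]
    simp only [a]
    push_cast
    ring

end LocalProd

/-! ### The Selberg majorant of the primes -/

section SquareCoeff

variable {ι : Type*} [DecidableEq ι] {P Q : Finset ι} {a : Finset ι → ℝ} {b δ γ : ι → ℝ}

/-- The triples `(S, T, C)` of subsets of `P` with `C ⊆ S ∩ T` and `Q = (S ∪ T) \ C`: if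
`b p ^ 2 = δ p - γ p * b p`, they index the terms of
`(∏ p ∈ S, b p) * ∏ p ∈ T, b p` that are multiples of `∏ p ∈ Q, b p`, where `C` is the set of
common factors at which `δ p` has been picked. -/
def squareTriples (P Q : Finset ι) : Finset (Finset ι × Finset ι × Finset ι) :=
  {x ∈ P.powerset ×ˢ P.powerset ×ˢ P.powerset |
    x.2.2 ⊆ x.1 ∩ x.2.1 ∧ (x.1 ∪ x.2.1) \ x.2.2 = Q}

/-- The coefficient of `∏ p ∈ Q, b p` in the square of `∑ S ⊆ P, a S * ∏ p ∈ S, b p`, when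
`b p ^ 2 = δ p - γ p * b p` for all `p ∈ P`. -/
def squareCoeff (P : Finset ι) (δ γ : ι → ℝ) (a : Finset ι → ℝ) (Q : Finset ι) : ℝ :=
  ∑ x ∈ squareTriples P Q,
    a x.1 * a x.2.1 * ((∏ p ∈ x.2.2, δ p) * ∏ p ∈ (x.1 ∩ x.2.1) \ x.2.2, -γ p)

lemma mem_squareTriples {x : Finset ι × Finset ι × Finset ι} :
    x ∈ squareTriples P Q ↔ (x.1 ⊆ P ∧ x.2.1 ⊆ P ∧ x.2.2 ⊆ P) ∧ x.2.2 ⊆ x.1 ∩ x.2.1 ∧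
      (x.1 ∪ x.2.1) \ x.2.2 = Q := by
  simp only [squareTriples, mem_filter, mem_product, mem_powerset]

lemma prod_mul_prod_eq_sum (hb : ∀ p ∈ P, b p ^ 2 = δ p - γ p * b p) {S T : Finset ι}
    (hS : S ⊆ P) :
    (∏ p ∈ S, b p) * ∏ p ∈ T, b p = ∑ C ∈ (S ∩ T).powerset,
      ((∏ p ∈ C, δ p) * ∏ p ∈ (S ∩ T) \ C, -γ p) * ∏ p ∈ (S ∪ T) \ C, b p := by
  have square_inter : (∏ p ∈ S ∩ T, b p) * ∏ p ∈ S ∩ T, b p =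
      ∑ C ∈ (S ∩ T).powerset, (∏ p ∈ C, δ p) * ∏ p ∈ (S ∩ T) \ C, -γ p * b p := by
    rw [← prod_mul_distrib, ← prod_add]
    refine prod_congr rfl fun p hp ↦ ?_
    rw [← pow_two, hb p (hS (mem_inter.1 hp).1)]
    ring
  have disjoint : Disjoint ((S ∪ T) \ (S ∩ T)) (S ∩ T) := sdiff_disjoint
  have union_eq : (S ∪ T) \ (S ∩ T) ∪ (S ∩ T) = S ∪ T :=
    sdiff_union_of_subset (inter_subset_left.trans subset_union_left)
  rw [← prod_union_inter, ← union_eq, prod_union disjoint, mul_assoc, square_inter, mul_sum,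
    union_eq]
  refine sum_congr rfl fun C hC ↦ ?_
  have split : (S ∪ T) \ C = (S ∪ T) \ (S ∩ T) ∪ (S ∩ T) \ C := by
    have := mem_powerset.1 hC
    grind
  rw [split, prod_union (disjoint.mono_right sdiff_subset), prod_mul_distrib]
  ring

lemma sq_sum_eq_sum_squareCoeff (hb : ∀ p ∈ P, b p ^ 2 = δ p - γ p * b p) :
    (∑ S ∈ P.powerset, a S * ∏ p ∈ S, b p) ^ 2 =
      ∑ Q ∈ P.powerset, squareCoeff P δ γ a Q * ∏ p ∈ Q, b p := by
  let triples : Finset (Finset ι × Finset ι × Finset ι) :=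
    {x ∈ P.powerset ×ˢ P.powerset ×ˢ P.powerset | x.2.2 ⊆ x.1 ∩ x.2.1}
  let term (x : Finset ι × Finset ι × Finset ι) : ℝ :=
    a x.1 * a x.2.1 * ((∏ p ∈ x.2.2, δ p) * ∏ p ∈ (x.1 ∩ x.2.1) \ x.2.2, -γ p)
  have expand : (∑ S ∈ P.powerset, a S * ∏ p ∈ S, b p) ^ 2 =
      ∑ x ∈ triples, term x * ∏ p ∈ (x.1 ∪ x.2.1) \ x.2.2, b p := by
    simp only [triples, sum_filter, sum_product]
    rw [pow_two, sum_mul_sum]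
    refine sum_congr rfl fun S hS ↦ sum_congr rfl fun T _ ↦ ?_
    have inter_mem : (S ∩ T).powerset = {C ∈ P.powerset | C ⊆ S ∩ T} := by
      ext C
      have := mem_powerset.1 hS
      grind
    rw [mul_mul_mul_comm, prod_mul_prod_eq_sum hb (mem_powerset.1 hS), mul_sum, inter_mem,
      sum_filter]
    refine sum_congr rfl fun C _ ↦ ?_
    split_ifs <;> ring
  have maps (x) (hx : x ∈ triples) : (x.1 ∪ x.2.1) \ x.2.2 ∈ P.powerset := by
    grind
  rw [expand, ← sum_fiberwise_of_maps_to maps]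
  refine sum_congr rfl fun Q _ ↦ ?_
  rw [squareCoeff, sum_mul, squareTriples, ← filter_filter]
  refine sum_congr rfl fun x hx ↦ ?_
  rw [(mem_filter.1 hx).2]

lemma squareCoeff_empty :
    squareCoeff P δ γ a ∅ = ∑ C ∈ P.powerset, a C ^ 2 * ∏ p ∈ C, δ p := by
  have diagonal {x : Finset ι × Finset ι × Finset ι} (hx : x ∈ squareTriples P ∅) :
      x = (x.2.2, x.2.2, x.2.2) := by
    obtain ⟨-, hC, hST⟩ := mem_squareTriples.1 hx
    rw [sdiff_eq_empty_iff_subset] at hST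
    exact Prod.ext ((subset_union_left.trans hST).antisymm (hC.trans inter_subset_left))
      (Prod.ext ((subset_union_right.trans hST).antisymm (hC.trans inter_subset_right)) rfl)
  refine sum_bij' (fun x _ ↦ x.2.2) (fun C _ ↦ (C, C, C))
    (fun x hx ↦ mem_powerset.2 (mem_squareTriples.1 hx).1.2.2)
    (fun C hC ↦ by simpa [mem_squareTriples] using hC)
    (fun x hx ↦ (diagonal hx).symm) (fun C _ ↦ rfl) fun x hx ↦ ?_
  rw [diagonal hx]
  simp [pow_two]

lemma exists_of_squareCoeff_ne_zero (h : squareCoeff P δ γ a Q ≠ 0) :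
    ∃ S ⊆ P, ∃ T ⊆ P, a S ≠ 0 ∧ a T ≠ 0 ∧ Q ⊆ S ∪ T := by
  obtain ⟨x, hx, hne⟩ := exists_ne_zero_of_sum_ne_zero h
  obtain ⟨⟨hS, hT, -⟩, -, rfl⟩ := mem_squareTriples.1 hx
  have ha := left_ne_zero_of_mul hne
  exact ⟨_, hS, _, hT, left_ne_zero_of_mul ha, right_ne_zero_of_mul ha, sdiff_subset⟩

lemma sum_squareTriples_le {F : Finset ι → ℝ} (hF : ∀ C ⊆ P, 0 ≤ F C) :
    ∑ x ∈ squareTriples P Q, F x.2.2 ≤ 4 ^ #Q * ∑ C ∈ P.powerset, F C := by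
  let code (x : Finset ι × Finset ι × Finset ι) : Finset ι × Finset ι × Finset ι :=
    (x.1 \ x.2.2, x.2.1 \ x.2.2, x.2.2)
  have code_injOn : Set.InjOn code (squareTriples P Q) := by
    rintro ⟨S, T, C⟩ hx ⟨S', T', C'⟩ hy h
    obtain ⟨-, hC, -⟩ := mem_squareTriples.1 hx
    obtain ⟨-, hC', -⟩ := mem_squareTriples.1 hy
    simp only [code, Prod.mk.injEq] at h hC hC'
    obtain ⟨hS, hT, rfl⟩ := h
    rw [← sdiff_union_of_subset (hC.trans inter_subset_left), hS,
      sdiff_union_of_subset (hC'.trans inter_subset_left),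
      ← sdiff_union_of_subset (hC.trans inter_subset_right), hT,
      sdiff_union_of_subset (hC'.trans inter_subset_right)]
  have image_subset :
      (squareTriples P Q).image code ⊆ Q.powerset ×ˢ Q.powerset ×ˢ P.powerset := by
    intro y hy
    obtain ⟨x, hx, rfl⟩ := mem_image.1 hy
    obtain ⟨⟨-, -, hC⟩, -, rfl⟩ := mem_squareTriples.1 hx
    simp only [code, mem_product, mem_powerset]
    exact ⟨sdiff_subset_sdiff subset_union_left le_rfl,
      sdiff_subset_sdiff subset_union_right le_rfl, hC⟩
  calc ∑ x ∈ squareTriples P Q, F x.2.2 = ∑ y ∈ (squareTriples P Q).image code, F y.2.2 :=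
        (sum_image (f := fun y ↦ F y.2.2) code_injOn).symm
    _ ≤ ∑ y ∈ Q.powerset ×ˢ Q.powerset ×ˢ P.powerset, F y.2.2 :=
        sum_le_sum_of_subset_of_nonneg image_subset fun y hy _ ↦
          hF _ (mem_powerset.1 (mem_product.1 (mem_product.1 hy).2).2)
    _ = 4 ^ #Q * ∑ C ∈ P.powerset, F C := by
        simp only [sum_product, sum_const, card_powerset, nsmul_eq_mul, Nat.cast_pow,
          Nat.cast_ofNat, ← mul_assoc, ← mul_pow]
        norm_num

lemma abs_squareCoeff_le (ha : ∀ S, 0 ≤ a S) (anti : ∀ S T, S ⊆ T → T ⊆ P → a T ≤ a S)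
    (hδ : ∀ p ∈ P, 0 ≤ δ p) (hγ : ∀ p ∈ P, 0 ≤ γ p) (hγ1 : ∀ p ∈ P, γ p ≤ 1) :
    |squareCoeff P δ γ a Q| ≤ 4 ^ #Q * ∑ C ∈ P.powerset, a C ^ 2 * ∏ p ∈ C, δ p := by
  have prod_nonneg {C : Finset ι} (hC : C ⊆ P) : 0 ≤ ∏ p ∈ C, δ p :=
    prod_nonneg fun p hp ↦ hδ p (hC hp)
  refine (abs_sum_le_sum_abs _ _).trans <| (sum_le_sum fun x hx ↦ ?_).trans <|
    sum_squareTriples_le fun C hC ↦ mul_nonneg (sq_nonneg _) (prod_nonneg hC)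
  obtain ⟨⟨hS, hT, hC⟩, hCST, -⟩ := mem_squareTriples.1 hx
  have gamma_le : |∏ p ∈ (x.1 ∩ x.2.1) \ x.2.2, -γ p| ≤ 1 := by
    rw [abs_prod]
    refine prod_le_one (fun p _ ↦ abs_nonneg _) fun p hp ↦ ?_
    have hpP : p ∈ P := hS (mem_inter.1 (mem_sdiff.1 hp).1).1
    rw [abs_neg, abs_of_nonneg (hγ p hpP)]
    exact hγ1 p hpP
  rw [abs_mul, abs_mul, abs_mul, abs_of_nonneg (ha _), abs_of_nonneg (ha _),
    abs_of_nonneg (prod_nonneg hC), pow_two]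
  refine mul_le_mul (mul_le_mul (anti _ _ (hCST.trans inter_subset_left) hS)
    (anti _ _ (hCST.trans inter_subset_right) hT) (ha _) (ha _))
    (mul_le_of_le_one_right (prod_nonneg hC) gamma_le)
    (mul_nonneg (prod_nonneg hC) (abs_nonneg _)) (mul_nonneg (ha _) (ha _))

end SquareCoeff

section Selberg

variable {N R w : ℕ} {S T : Finset ℕ}

lemma mem_primesUpTo {p : ℕ} : p ∈ primesUpTo N ↔ p ≤ N ∧ p.Prime := by
  rw [primesUpTo, mem_filter, mem_range, Nat.lt_succ_iff]

lemma primesUpTo_mono {M : ℕ} (h : M ≤ N) : primesUpTo M ⊆ primesUpTo N := fun _ hp ↦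
  mem_primesUpTo.2 ⟨(mem_primesUpTo.1 hp).1.trans h, (mem_primesUpTo.1 hp).2⟩

lemma prime_of_subset_primesUpTo (hS : S ⊆ primesUpTo N) : ∀ p ∈ S, p.Prime := fun _ hp ↦
  (mem_primesUpTo.1 (hS hp)).2

lemma prod_le_prod_of_subset_primes (hT : ∀ p ∈ T, p.Prime) (hST : S ⊆ T) :
    ∏ p ∈ S, p ≤ ∏ p ∈ T, p :=
  prod_le_prod_of_subset_of_one_le' hST fun p hp _ ↦ (hT p hp).one_le

lemma invTotient_le_one (hS : ∀ p ∈ S, p.Prime) : invTotient S ≤ 1 := by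
  refine prod_le_one (fun p hp ↦ one_div_sub_one_nonneg (hS p hp)) fun p hp ↦ ?_
  have : (2 : ℝ) ≤ p := by exact_mod_cast (hS p hp).two_le
  exact (div_le_one (by linarith)).2 (by linarith)

lemma invTotient_sdiff_mul_inter (S T : Finset ℕ) :
    invTotient (S \ T) * invTotient (S ∩ T) = invTotient S := by
  rw [invTotient, invTotient, invTotient, ← prod_union (disjoint_sdiff_inter S T),
    sdiff_union_inter]

lemma prod_le_of_forall_le {ι : Type*} {s : Finset ι} (hs : s.Nonempty) {F : ι → ℝ} {ε : ℝ}
    (hε : ε ≤ 1) (h0 : ∀ i ∈ s, 0 ≤ F i) (h1 : ∀ i ∈ s, F i ≤ ε) : ∏ i ∈ s, F i ≤ ε := by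
  classical
  obtain ⟨i, hi⟩ := hs
  have rest_le : ∏ j ∈ s.erase i, F j ≤ 1 :=
    prod_le_one (fun j hj ↦ h0 j (mem_of_mem_erase hj))
      fun j hj ↦ (h1 j (mem_of_mem_erase hj)).trans hε
  rw [← mul_prod_erase s F hi]
  exact (mul_le_of_le_one_right (h0 i hi) rest_le).trans (h1 i hi)

lemma pow_card_mul_invTotient_le {c : ℝ} (hc : 0 ≤ c) (hw : 0 < w) (hcw : c ≤ w)
    (hS : ∀ p ∈ S, p.Prime) (h : (S \ primesUpTo w).Nonempty) :
    c ^ #(S \ primesUpTo w) * invTotient S ≤ c / w := by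
  have hw' : (0 : ℝ) < w := by exact_mod_cast hw
  have prime {p : ℕ} (hp : p ∈ S \ primesUpTo w) : p.Prime := hS p (mem_sdiff.1 hp).1
  have large {p : ℕ} (hp : p ∈ S \ primesUpTo w) : (w : ℝ) + 1 ≤ p := by
    have : w < p := by
      by_contra! hpw
      exact (mem_sdiff.1 hp).2 (mem_primesUpTo.2 ⟨hpw, prime hp⟩)
    exact_mod_cast this
  have large_part : c ^ #(S \ primesUpTo w) * invTotient (S \ primesUpTo w) ≤ c / w := by
    rw [invTotient, ← prod_const, ← prod_mul_distrib]
    refine prod_le_of_forall_le h ((div_le_one hw').2 hcw)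
      (fun p hp ↦ mul_nonneg hc (one_div_sub_one_nonneg (prime hp))) fun p hp ↦ ?_
    rw [mul_one_div]
    exact div_le_div_of_nonneg_left hc hw' (by linarith [large hp])
  have small_part : invTotient (S ∩ primesUpTo w) ≤ 1 :=
    invTotient_le_one fun p hp ↦ hS p (mem_inter.1 hp).1
  calc c ^ #(S \ primesUpTo w) * invTotient S =
        c ^ #(S \ primesUpTo w) * invTotient (S \ primesUpTo w) *
          invTotient (S ∩ primesUpTo w) := by
        rw [mul_assoc, invTotient_sdiff_mul_inter]
    _ ≤ c ^ #(S \ primesUpTo w) * invTotient (S \ primesUpTo w) :=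
        mul_le_of_le_one_right
          (mul_nonneg (pow_nonneg hc _) (invTotient_nonneg fun p hp ↦ prime hp)) small_part
    _ ≤ c / w := large_part

/-- The indicator of the integers free of prime factors at most `w`, divided by its density. -/
noncomputable def roughWeight (w : ℕ) (n : ℤ) : ℝ := ∏ p ∈ primesUpTo w, (1 + localFactor p n)

lemma roughWeight_eq_sum (w : ℕ) (n : ℤ) :
    roughWeight w n = ∑ S ∈ (primesUpTo w).powerset, localProd S n :=
  prod_one_add _

lemma roughWeight_nonneg (w : ℕ) (n : ℤ) : 0 ≤ roughWeight w n := by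
  refine prod_nonneg fun p hp ↦ ?_
  rw [localFactor]
  split_ifs
  · norm_num
  · linarith [one_div_sub_one_nonneg (mem_primesUpTo.1 hp).2]

lemma periodic_roughWeight {m : ℕ} (hm : primorial w ∣ m) :
    Function.Periodic (roughWeight w) m := fun n ↦ by
  refine prod_congr rfl fun p hp ↦ ?_
  have hpm : (p : ℤ) ∣ m :=
    Int.natCast_dvd_natCast.2 ((dvd_prod_of_mem (fun p ↦ p) hp).trans hm)
  simp only [localFactor, Int.dvd_add_left hpm]

theorem sqNorm_doubleAverage_roughWeight_le {M : ℕ} (hN : primorial w ^ 4 ≤ N)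
    (hM : primorial w ^ 4 ≤ M) (f : ℤ → ℝ) :
    sqNorm (doubleAverage N M (roughWeight w) f) ≤ ENNReal.ofReal 4 * sqNorm f := by
  have bound := sqNorm_doubleAverage_le_of_localProd (P := primesUpTo w) (e := fun _ ↦ 1)
    (prime_of_subset_primesUpTo le_rfl) (primorial_pos w) hN hM zero_le_one
    (fun S hS _ ↦ prod_le_prod_of_subset_primes (prime_of_subset_primesUpTo le_rfl) hS)
    (fun S hS ↦ by simpa using invTotient_le_one (prime_of_subset_primesUpTo hS)) f
  simp only [one_mul, one_pow, mul_one, ← roughWeight_eq_sum] at bound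
  exact bound

theorem sqNorm_doubleAverage_roughWeight_sub_le {M v : ℕ} (hv : 1 ≤ v) (hvw : v ≤ w)
    (hN : primorial w ^ 4 ≤ N) (hM : primorial w ^ 4 ≤ M) (f : ℤ → ℝ) :
    sqNorm (doubleAverage N M (fun n ↦ roughWeight w n - roughWeight v n) f) ≤
      ENNReal.ofReal (4 * (1 / v) ^ 2) * sqNorm f := by
  let e (S : Finset ℕ) : ℝ := if S ⊆ primesUpTo v then 0 else 1
  have bound := sqNorm_doubleAverage_le_of_localProd (P := primesUpTo w) (e := e)
    (ε := 1 / v) (prime_of_subset_primesUpTo le_rfl) (primorial_pos w) hN hM (by positivity)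
    (fun S hS _ ↦ prod_le_prod_of_subset_primes (prime_of_subset_primesUpTo le_rfl) hS)
    (fun S hS ↦ ?_) f
  · convert bound using 3
    ext n
    rw [roughWeight_eq_sum, roughWeight_eq_sum, sub_eq_iff_eq_add,
      ← sum_filter_not_add_sum_filter _ (· ⊆ primesUpTo v)]
    congr 1
    · simp only [e, ite_mul, zero_mul, one_mul, sum_filter, ite_not]
    · congr 1
      ext S
      simp only [mem_filter, mem_powerset]
      exact ⟨fun h ↦ h.2, fun h ↦ ⟨h.trans (primesUpTo_mono hvw), h⟩⟩
  · simp only [e]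
    split_ifs with h
    · simp
    · have := pow_card_mul_invTotient_le zero_le_one hv (by exact_mod_cast hv)
        (prime_of_subset_primesUpTo hS) (sdiff_nonempty.2 h)
      simpa using this

/-- The primes in `(w, R]`. -/
def primesBetween (w R : ℕ) : Finset ℕ := primesUpTo R \ primesUpTo w

/-- The truncation of Selberg's sieve: the indicator of `∏ p ∈ S, p ≤ R`. -/
noncomputable def levelIndicator (R : ℕ) (S : Finset ℕ) : ℝ := if ∏ p ∈ S, p ≤ R then 1 else 0

/-- The divisor sum whose square is Selberg's weight, in the basis of local factors. -/
noncomputable def selbergSum (w R : ℕ) (n : ℤ) : ℝ :=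
  ∑ S ∈ (primesBetween w R).powerset, levelIndicator R S * localProd S n

/-- The mean of the square of `selbergSum w R`, and also its value at the primes above `R`. -/
noncomputable def selbergMass (w R : ℕ) : ℝ :=
  ∑ S ∈ (primesBetween w R).powerset, levelIndicator R S * invTotient S

/-- Selberg's upper bound sieve weight of level `R`, sifted completely by the primes up to `w`. -/
noncomputable def selbergWeight (w R : ℕ) (n : ℤ) : ℝ :=
  (selbergMass w R)⁻¹ * (roughWeight w n * selbergSum w R n ^ 2)

lemma primesBetween_subset : primesBetween w R ⊆ primesUpTo R := sdiff_subset

lemma levelIndicator_nonneg (R : ℕ) (S : Finset ℕ) : 0 ≤ levelIndicator R S := by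
  unfold levelIndicator
  split_ifs <;> norm_num

lemma levelIndicator_anti (hT : ∀ p ∈ T, p.Prime) (hST : S ⊆ T) :
    levelIndicator R T ≤ levelIndicator R S := by
  unfold levelIndicator
  split_ifs with hTR hSR
  · exact le_rfl
  · exact absurd ((prod_le_prod_of_subset_primes hT hST).trans hTR) hSR
  · exact zero_le_one
  · exact le_rfl

lemma prod_le_of_levelIndicator_ne_zero (h : levelIndicator R S ≠ 0) : ∏ p ∈ S, p ≤ R :=
  (ite_ne_right_iff.1 h).1

lemma levelIndicator_sq (R : ℕ) (S : Finset ℕ) :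
    levelIndicator R S ^ 2 = levelIndicator R S := by
  unfold levelIndicator
  split_ifs <;> norm_num

lemma one_le_selbergMass (w : ℕ) (hR : 1 ≤ R) : 1 ≤ selbergMass w R := by
  have empty_term : levelIndicator R ∅ * invTotient ∅ = 1 := by
    simp [levelIndicator, invTotient, hR]
  rw [← empty_term]
  exact single_le_sum (f := fun S ↦ levelIndicator R S * invTotient S)
    (fun S hS ↦ mul_nonneg (levelIndicator_nonneg R S) (invTotient_nonneg
      (prime_of_subset_primesUpTo ((mem_powerset.1 hS).trans primesBetween_subset))))
    (empty_mem_powerset _)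

lemma selbergWeight_nonneg (w : ℕ) (hR : 1 ≤ R) (n : ℤ) : 0 ≤ selbergWeight w R n :=
  mul_nonneg (inv_nonneg.2 (zero_le_one.trans (one_le_selbergMass w hR)))
    (mul_nonneg (roughWeight_nonneg w n) (sq_nonneg _))

lemma roughWeight_mul_sum (hwR : w ≤ R) (c : Finset ℕ → ℝ) (n : ℤ) :
    roughWeight w n * ∑ T ∈ (primesBetween w R).powerset, c T * localProd T n =
      ∑ U ∈ (primesUpTo R).powerset, c (U \ primesUpTo w) * localProd U n := by
  have disjoint : Disjoint (primesUpTo w) (primesBetween w R) := disjoint_sdiff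
  have union_eq : primesUpTo w ∪ primesBetween w R = primesUpTo R :=
    union_sdiff_of_subset (primesUpTo_mono hwR)
  have subset {x : Finset ℕ × Finset ℕ}
      (hx : x ∈ (primesUpTo w).powerset ×ˢ (primesBetween w R).powerset) :
      x.1 ⊆ primesUpTo w ∧ x.2 ⊆ primesBetween w R := by
    simpa only [mem_product, mem_powerset] using hx
  have inter_eq {x : Finset ℕ × Finset ℕ}
      (hx : x ∈ (primesUpTo w).powerset ×ˢ (primesBetween w R).powerset) :
      (x.1 ∪ x.2) ∩ primesUpTo w = x.1 := by
    rw [union_inter_distrib_right, inter_eq_left.2 (subset hx).1,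
      disjoint_iff_inter_eq_empty.1 (disjoint.symm.mono_left (subset hx).2), union_empty]
  have sdiff_eq {x : Finset ℕ × Finset ℕ}
      (hx : x ∈ (primesUpTo w).powerset ×ˢ (primesBetween w R).powerset) :
      (x.1 ∪ x.2) \ primesUpTo w = x.2 := by
    rw [union_sdiff_distrib, sdiff_eq_empty_iff_subset.2 (subset hx).1,
      sdiff_eq_self_of_disjoint (disjoint.symm.mono_left (subset hx).2), empty_union]
  rw [roughWeight_eq_sum, sum_mul_sum, ← sum_product']
  refine sum_bij' (fun x _ ↦ x.1 ∪ x.2) (fun U _ ↦ (U ∩ primesUpTo w, U \ primesUpTo w))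
    (fun x hx ↦ ?_) (fun U hU ↦ ?_) (fun x hx ↦ Prod.ext (inter_eq hx) (sdiff_eq hx))
    (fun U _ ↦ (union_comm _ _).trans (sdiff_union_inter U _)) (fun x hx ↦ ?_)
  · rw [mem_powerset, ← union_eq]
    exact union_subset_union (subset hx).1 (subset hx).2
  · exact mem_product.2 ⟨mem_powerset.2 inter_subset_right,
      mem_powerset.2 (sdiff_subset_sdiff (mem_powerset.1 hU) le_rfl)⟩
  · rw [sdiff_eq hx, localProd, localProd, localProd,
      prod_union (disjoint.mono (subset hx).1 (subset hx).2)]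
    ring

/-- The coefficients of `selbergWeight w R / roughWeight w - 1` in the products of local factors. -/
noncomputable def selbergCoeff (w R : ℕ) (Q : Finset ℕ) : ℝ :=
  (selbergMass w R)⁻¹ * squareCoeff (primesBetween w R) (fun p ↦ 1 / ((p : ℝ) - 1))
    (fun p ↦ ((p : ℝ) - 2) / (p - 1)) (levelIndicator R) Q - if Q = ∅ then 1 else 0

lemma localFactor_sq {p : ℕ} (hp : p.Prime) (n : ℤ) :
    localFactor p n ^ 2 = 1 / ((p : ℝ) - 1) - ((p : ℝ) - 2) / (p - 1) * localFactor p n := by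
  have hp1 : (p : ℝ) - 1 ≠ 0 := by
    rw [sub_ne_zero]
    exact_mod_cast hp.ne_one
  rw [localFactor]
  split_ifs <;> (field_simp; ring)

lemma selbergWeight_sub_roughWeight_eq (hwR : w ≤ R) (n : ℤ) :
    selbergWeight w R n - roughWeight w n =
      ∑ U ∈ (primesUpTo R).powerset, selbergCoeff w R (U \ primesUpTo w) * localProd U n := by
  rw [← roughWeight_mul_sum hwR]
  have hb : ∀ p ∈ primesBetween w R, localFactor p n ^ 2 =
      1 / ((p : ℝ) - 1) - ((p : ℝ) - 2) / (p - 1) * localFactor p n := fun p hp ↦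
    localFactor_sq (mem_primesUpTo.1 (primesBetween_subset hp)).2 n
  have square : selbergSum w R n ^ 2 = ∑ Q ∈ (primesBetween w R).powerset,
      squareCoeff (primesBetween w R) (fun p ↦ 1 / ((p : ℝ) - 1))
        (fun p ↦ ((p : ℝ) - 2) / (p - 1)) (levelIndicator R) Q * localProd Q n :=
    sq_sum_eq_sum_squareCoeff hb
  simp only [selbergCoeff, sub_mul, sum_sub_distrib, mul_assoc, ← mul_sum, ← square]
  simp only [ite_mul, one_mul, zero_mul, sum_ite_eq', empty_mem_powerset, if_true, localProd,
    prod_empty, selbergWeight]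
  ring

lemma squareCoeff_levelIndicator_empty (w R : ℕ) :
    squareCoeff (primesBetween w R) (fun p ↦ 1 / ((p : ℝ) - 1))
      (fun p ↦ ((p : ℝ) - 2) / (p - 1)) (levelIndicator R) ∅ = selbergMass w R := by
  simp only [squareCoeff_empty, levelIndicator_sq, selbergMass, invTotient]

lemma selbergCoeff_empty (w : ℕ) (hR : 1 ≤ R) : selbergCoeff w R ∅ = 0 := by
  have mass_ne_zero : selbergMass w R ≠ 0 := (zero_lt_one.trans_le (one_le_selbergMass w hR)).ne'
  rw [selbergCoeff, squareCoeff_levelIndicator_empty, inv_mul_cancel₀ mass_ne_zero, if_pos rfl,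
    sub_self]

lemma selbergCoeff_of_nonempty {Q : Finset ℕ} (hQ : Q.Nonempty) : selbergCoeff w R Q =
    (selbergMass w R)⁻¹ * squareCoeff (primesBetween w R) (fun p ↦ 1 / ((p : ℝ) - 1))
      (fun p ↦ ((p : ℝ) - 2) / (p - 1)) (levelIndicator R) Q := by
  rw [selbergCoeff, if_neg hQ.ne_empty, sub_zero]

lemma abs_selbergCoeff_le (hR : 1 ≤ R) {Q : Finset ℕ} (hQ : Q.Nonempty) :
    |selbergCoeff w R Q| ≤ 4 ^ #Q := by
  have mass_pos : 0 < selbergMass w R := zero_lt_one.trans_le (one_le_selbergMass w hR)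
  have two_le {p : ℕ} (hp : p ∈ primesBetween w R) : (2 : ℝ) ≤ p := by
    exact_mod_cast (mem_primesUpTo.1 (primesBetween_subset hp)).2.two_le
  have bound := abs_squareCoeff_le (P := primesBetween w R) (Q := Q) (a := levelIndicator R)
    (δ := fun p ↦ 1 / ((p : ℝ) - 1)) (γ := fun p ↦ ((p : ℝ) - 2) / (p - 1))
    (levelIndicator_nonneg R)
    (fun S T hST hT ↦ levelIndicator_anti
      (prime_of_subset_primesUpTo (hT.trans primesBetween_subset)) hST)
    (fun p hp ↦ one_div_nonneg.2 (by linarith [two_le hp]))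
    (fun p hp ↦ div_nonneg (by linarith [two_le hp]) (by linarith [two_le hp]))
    (fun p hp ↦ (div_le_one (by linarith [two_le hp])).2 (by linarith))
  rw [← squareCoeff_empty, squareCoeff_levelIndicator_empty] at bound
  rw [selbergCoeff_of_nonempty hQ, abs_mul, abs_of_pos (inv_pos.2 mass_pos),
    inv_mul_le_iff₀ mass_pos, mul_comm]
  exact bound

lemma prod_le_of_selbergCoeff_ne_zero {Q : Finset ℕ} (hQ : Q.Nonempty)
    (h : selbergCoeff w R Q ≠ 0) : ∏ p ∈ Q, p ≤ R ^ 2 := by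
  rw [selbergCoeff_of_nonempty hQ] at h
  obtain ⟨S, hS, T, hT, haS, haT, hQST⟩ :=
    exists_of_squareCoeff_ne_zero (right_ne_zero_of_mul h)
  have prime : ∀ p ∈ S ∪ T, p.Prime :=
    prime_of_subset_primesUpTo ((union_subset hS hT).trans primesBetween_subset)
  calc ∏ p ∈ Q, p ≤ ∏ p ∈ S ∪ T, p := prod_le_prod_of_subset_primes prime hQST
    _ ≤ (∏ p ∈ S ∪ T, p) * ∏ p ∈ S ∩ T, p := Nat.le_mul_of_pos_right _ <|
        prod_pos fun p hp ↦ (prime p (inter_subset_union hp)).pos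
    _ = (∏ p ∈ S, p) * ∏ p ∈ T, p := prod_union_inter
    _ ≤ R * R := Nat.mul_le_mul (prod_le_of_levelIndicator_ne_zero haS)
        (prod_le_of_levelIndicator_ne_zero haT)
    _ = R ^ 2 := (pow_two R).symm

theorem sqNorm_doubleAverage_selbergWeight_sub_le {M : ℕ} (hw : 4 ≤ w) (hwR : w ≤ R)
    (hN : (primorial w * R ^ 2) ^ 4 ≤ N) (hM : (primorial w * R ^ 2) ^ 4 ≤ M) (f : ℤ → ℝ) :
    sqNorm (doubleAverage N M (fun n ↦ selbergWeight w R n - roughWeight w n) f) ≤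
      ENNReal.ofReal (4 * (4 / w) ^ 2) * sqNorm f := by
  have hR : 1 ≤ R := by omega
  have nonempty {U : Finset ℕ} (h : selbergCoeff w R (U \ primesUpTo w) ≠ 0) :
      (U \ primesUpTo w).Nonempty := by
    contrapose! h
    rw [h, selbergCoeff_empty w hR]
  simp only [selbergWeight_sub_roughWeight_eq hwR]
  refine sqNorm_doubleAverage_le_of_localProd (prime_of_subset_primesUpTo le_rfl)
    (Nat.mul_pos (primorial_pos w) (Nat.pow_pos hR)) hN hM (by positivity)
    (fun U _ hne ↦ ?_) (fun U hU ↦ ?_) f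
  · rw [← prod_inter_mul_prod_sdiff U (primesUpTo w)]
    exact Nat.mul_le_mul (prod_le_prod_of_subset_primes
      (prime_of_subset_primesUpTo le_rfl) inter_subset_right)
      (prod_le_of_selbergCoeff_ne_zero (nonempty hne) hne)
  · by_cases hne : selbergCoeff w R (U \ primesUpTo w) = 0
    · rw [hne, abs_zero, zero_mul]
      positivity
    · exact (mul_le_mul_of_nonneg_right (abs_selbergCoeff_le hR (nonempty hne))
        (invTotient_nonneg (prime_of_subset_primesUpTo hU))).trans <|
        pow_card_mul_invTotient_le (by norm_num) (by omega) (by exact_mod_cast hw)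
          (prime_of_subset_primesUpTo hU) (nonempty hne)

lemma localProd_eq_invTotient {q : ℕ} (hq : q.Prime) (hRq : R < q) (hS : S ⊆ primesUpTo R) :
    localProd S q = invTotient S := by
  refine prod_congr rfl fun p hp ↦ ?_
  obtain ⟨hpR, hp'⟩ := mem_primesUpTo.1 (hS hp)
  rw [localFactor, if_neg]
  intro hpq
  have := (Nat.prime_dvd_prime_iff_eq hp' hq).1 (Int.natCast_dvd_natCast.1 hpq)
  omega

lemma sum_one_div_le_two_mul_sum_squarefree (R : ℕ) :
    ∑ m ∈ Icc 1 R, 1 / (m : ℝ) ≤ 2 * ∑ q ∈ Icc 1 R with Squarefree q, 1 / (q : ℝ) := by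
  have factor (m : ℕ) : ∃ x : ℕ × ℕ, x.1 ^ 2 * x.2 = m ∧ Squarefree x.2 := by
    obtain ⟨a, b, h, hs⟩ := Nat.sq_mul_squarefree m
    exact ⟨(b, a), h, hs⟩
  choose φ hφ hφs using factor
  have maps : (Icc 1 R).image φ ⊆ Icc 1 R ×ˢ {q ∈ Icc 1 R | Squarefree q} := fun x hx ↦ by
    obtain ⟨m, hm, rfl⟩ := mem_image.1 hx
    obtain ⟨hm1, hmR⟩ := mem_Icc.1 hm
    have dvd_fst : (φ m).1 ∣ m := (dvd_pow_self _ two_ne_zero).trans ⟨_, (hφ m).symm⟩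
    have dvd_snd : (φ m).2 ∣ m := ⟨_, ((mul_comm _ _).trans (hφ m)).symm⟩
    rw [mem_product, mem_filter, mem_Icc, mem_Icc]
    exact ⟨⟨Nat.pos_of_dvd_of_pos dvd_fst hm1, (Nat.le_of_dvd hm1 dvd_fst).trans hmR⟩,
      ⟨Nat.pos_of_dvd_of_pos dvd_snd hm1, (Nat.le_of_dvd hm1 dvd_snd).trans hmR⟩, hφs m⟩
  have sum_inv_sq_le : ∑ d ∈ Icc 1 R, ((d : ℝ) ^ 2)⁻¹ ≤ 2 := by
    have h := sum_Ioo_inv_sq_le (α := ℝ) 0 (R + 1)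
    have interval : Icc 1 R = Ioo 0 (R + 1) := by ext; simp; omega
    rw [interval]
    simpa using h
  calc ∑ m ∈ Icc 1 R, 1 / (m : ℝ)
      = ∑ m ∈ Icc 1 R, (((φ m).1 : ℝ) ^ 2)⁻¹ * (1 / ((φ m).2 : ℝ)) :=
        sum_congr rfl fun m _ ↦ by
          nth_rw 1 [← hφ m]
          push_cast
          rw [one_div, one_div, mul_inv]
    _ = ∑ x ∈ (Icc 1 R).image φ, ((x.1 : ℝ) ^ 2)⁻¹ * (1 / (x.2 : ℝ)) :=
        (sum_image (f := fun x : ℕ × ℕ ↦ ((x.1 : ℝ) ^ 2)⁻¹ * (1 / (x.2 : ℝ)))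
          fun a _ b _ h ↦ by rw [← hφ a, ← hφ b, h]).symm
    _ ≤ ∑ x ∈ Icc 1 R ×ˢ {q ∈ Icc 1 R | Squarefree q}, ((x.1 : ℝ) ^ 2)⁻¹ * (1 / (x.2 : ℝ)) :=
        sum_le_sum_of_subset_of_nonneg maps fun x _ _ ↦ by positivity
    _ = (∑ d ∈ Icc 1 R, ((d : ℝ) ^ 2)⁻¹) * ∑ q ∈ Icc 1 R with Squarefree q, 1 / (q : ℝ) := by
        rw [sum_mul_sum, sum_product]
    _ ≤ 2 * ∑ q ∈ Icc 1 R with Squarefree q, 1 / (q : ℝ) :=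
        mul_le_mul_of_nonneg_right sum_inv_sq_le (sum_nonneg fun q _ ↦ by positivity)

lemma log_le_two_mul_sum_squarefree (hR : 1 ≤ R) :
    Real.log R ≤ 2 * ∑ q ∈ Icc 1 R with Squarefree q, 1 / (q : ℝ) := by
  have harmonic_eq : (harmonic R : ℝ) = ∑ m ∈ Icc 1 R, 1 / (m : ℝ) := by
    rw [harmonic_eq_sum_Icc]
    push_cast
    simp only [one_div]
  calc Real.log R ≤ Real.log (R + 1 : ℕ) :=
        Real.log_le_log (by exact_mod_cast hR) (by exact_mod_cast R.le_succ)
    _ ≤ harmonic R := log_add_one_le_harmonic R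
    _ ≤ _ := harmonic_eq.trans_le (sum_one_div_le_two_mul_sum_squarefree R)

lemma sum_squarefree_le_sum_invTotient (R : ℕ) :
    ∑ q ∈ Icc 1 R with Squarefree q, 1 / (q : ℝ) ≤
      ∑ U ∈ (primesUpTo R).powerset, levelIndicator R U * invTotient U := by
  have prod_eq {q : ℕ} (hq : q ∈ {q ∈ Icc 1 R | Squarefree q}) : ∏ p ∈ q.primeFactors, p = q :=
    Nat.prod_primeFactors_of_squarefree (mem_filter.1 hq).2
  have le_R {q : ℕ} (hq : q ∈ {q ∈ Icc 1 R | Squarefree q}) : 1 ≤ q ∧ q ≤ R :=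
    mem_Icc.1 (mem_filter.1 hq).1
  have injOn : Set.InjOn Nat.primeFactors ({q ∈ Icc 1 R | Squarefree q} : Finset ℕ) :=
    fun a ha b hb h ↦ by rw [← prod_eq ha, ← prod_eq hb, h]
  have maps : ({q ∈ Icc 1 R | Squarefree q}).image Nat.primeFactors ⊆ (primesUpTo R).powerset := by
    refine image_subset_iff.2 fun q hq ↦ mem_powerset.2 fun p hp ↦ ?_
    exact mem_primesUpTo.2 ⟨(Nat.le_of_mem_primeFactors hp).trans (le_R hq).2,
      Nat.prime_of_mem_primeFactors hp⟩
  refine (sum_le_sum fun q hq ↦ ?_).trans <|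
    (sum_image (f := fun U ↦ levelIndicator R U * invTotient U) injOn).symm.trans_le <|
    sum_le_sum_of_subset_of_nonneg maps fun U hU _ ↦ mul_nonneg (levelIndicator_nonneg R U)
      (invTotient_nonneg (prime_of_subset_primesUpTo (mem_powerset.1 hU)))
  rw [levelIndicator, if_pos ((prod_eq hq).trans_le (le_R hq).2), one_mul, invTotient]
  calc 1 / (q : ℝ) = ∏ p ∈ q.primeFactors, 1 / (p : ℝ) := by
        nth_rw 1 [← prod_eq hq]
        simp only [Nat.cast_prod, one_div, Finset.prod_inv_distrib]
    _ ≤ ∏ p ∈ q.primeFactors, 1 / ((p : ℝ) - 1) := by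
        refine prod_le_prod (fun p _ ↦ by positivity) fun p hp ↦ ?_
        have : (2 : ℝ) ≤ p := by exact_mod_cast (Nat.prime_of_mem_primeFactors hp).two_le
        exact one_div_le_one_div_of_le (by linarith) (by linarith)

theorem log_div_two_le_selbergWeight {p : ℕ} (hwR : w ≤ R) (hR : 1 ≤ R) (hp : p.Prime)
    (hRp : R < p) : Real.log R / 2 ≤ selbergWeight w R p := by
  have mass_ne_zero : selbergMass w R ≠ 0 := (zero_lt_one.trans_le (one_le_selbergMass w hR)).ne'
  have selbergSum_eq : selbergSum w R p = selbergMass w R :=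
    sum_congr rfl fun S hS ↦ by
      rw [localProd_eq_invTotient hp hRp ((mem_powerset.1 hS).trans primesBetween_subset)]
  calc Real.log R / 2 ≤ ∑ U ∈ (primesUpTo R).powerset, levelIndicator R U * invTotient U := by
        linarith [log_le_two_mul_sum_squarefree hR, sum_squarefree_le_sum_invTotient R]
    _ ≤ ∑ U ∈ (primesUpTo R).powerset,
          levelIndicator R (U \ primesUpTo w) * localProd U p := by
        refine sum_le_sum fun U hU ↦ ?_
        have hU' := mem_powerset.1 hU
        rw [localProd_eq_invTotient hp hRp hU']
        exact mul_le_mul_of_nonneg_right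
          (levelIndicator_anti (prime_of_subset_primesUpTo hU') sdiff_subset)
          (invTotient_nonneg (prime_of_subset_primesUpTo hU'))
    _ = roughWeight w p * selbergSum w R p := (roughWeight_mul_sum hwR _ _).symm
    _ = selbergWeight w R p := by
        rw [selbergWeight, selbergSum_eq]
        field_simp

end Selberg

/-! ### Maximal bounds along a sequence of operators -/

lemma tsum_ofReal_div_sq_ne_top (a : ℝ) : ∑' k : ℕ, ENNReal.ofReal ((a / k) ^ 2) ≠ ∞ := by
  have summable : Summable fun k : ℕ ↦ (a / k) ^ 2 := by
    simpa only [div_pow, mul_one_div] using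
      (Real.summable_one_div_nat_pow.2 one_lt_two).mul_left (a ^ 2)
  rw [← ENNReal.ofReal_tsum_of_nonneg (fun _ ↦ sq_nonneg _) summable]
  exact ENNReal.ofReal_ne_top

/-- The `ℓ²` maximal inequality for the operators `T k`, `k ≥ n`, on nonnegative functions, with
the supremum over `k` linearised: the index is an arbitrary function `κ` of the point. -/
def HasMaximalBound {α : Type*} (n : ℕ) (T : ℕ → (α → ℝ) → α → ℝ) : Prop :=
  ∃ C ≠ ∞, ∀ F : α → ℝ, (∀ x, 0 ≤ F x) → ∀ κ : α → ℕ, (∀ x, n ≤ κ x) →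
    sqNorm (fun x ↦ T (κ x) F x) ≤ C * sqNorm F

namespace HasMaximalBound

variable {α : Type*} {n : ℕ} {T U : ℕ → (α → ℝ) → α → ℝ}

lemma mono (hU : HasMaximalBound n U)
    (h : ∀ k, n ≤ k → ∀ F, (∀ x, 0 ≤ F x) → ∀ x, |T k F x| ≤ |U k F x|) :
    HasMaximalBound n T := by
  obtain ⟨C, hC, bound⟩ := hU
  exact ⟨C, hC, fun F hF κ hκ ↦ (sqNorm_mono fun x ↦ h _ (hκ x) F hF x).trans (bound F hF κ hκ)⟩

lemma add (hT : HasMaximalBound n T) (hU : HasMaximalBound n U) :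
    HasMaximalBound n fun k F x ↦ T k F x + U k F x := by
  obtain ⟨C, hC, boundT⟩ := hT
  obtain ⟨D, hD, boundU⟩ := hU
  refine ⟨2 * (C + D), ENNReal.mul_ne_top ofNat_ne_top (ENNReal.add_ne_top.2 ⟨hC, hD⟩),
    fun F hF κ hκ ↦ (sqNorm_add_le _ _).trans ?_⟩
  rw [mul_assoc, add_mul]
  gcongr
  exacts [boundT F hF κ hκ, boundU F hF κ hκ]

lemma const_mul (c : ℝ) (hT : HasMaximalBound n T) :
    HasMaximalBound n fun k F x ↦ c * T k F x := by
  obtain ⟨C, hC, bound⟩ := hT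
  refine ⟨ENNReal.ofReal (c ^ 2) * C, ENNReal.mul_ne_top ENNReal.ofReal_ne_top hC,
    fun F hF κ hκ ↦ ?_⟩
  rw [sqNorm_const_mul, mul_assoc]
  gcongr
  exact bound F hF κ hκ

lemma of_sqNorm_le_div_sq (a : ℝ)
    (h : ∀ k, n ≤ k → ∀ F, sqNorm (T k F) ≤ ENNReal.ofReal ((a / k) ^ 2) * sqNorm F) :
    HasMaximalBound n T := by
  refine ⟨_, tsum_ofReal_div_sq_ne_top a, fun F _ κ hκ ↦ ?_⟩
  rw [← ENNReal.tsum_mul_right]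
  exact sqNorm_choice_le_tsum_of_le (fun k ↦ T k F) hκ fun k hk ↦ h k hk F

lemma of_start (hT : HasMaximalBound n T) (h : ∀ k F, sqNorm (T k F) ≤ sqNorm F) :
    HasMaximalBound 0 T := by
  obtain ⟨C, hC, bound⟩ := hT
  refine ⟨n + C, ENNReal.add_ne_top.2 ⟨ENNReal.natCast_ne_top n, hC⟩, fun F hF κ _ ↦ ?_⟩
  calc sqNorm (fun x ↦ T (κ x) F x)
      ≤ ∑ k ∈ range n, sqNorm (T k F) + sqNorm (fun x ↦ T (max (κ x) n) F x) :=
        sqNorm_choice_le_sum_add (fun k ↦ T k F) κ n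
    _ ≤ ∑ _k ∈ range n, sqNorm F + C * sqNorm F :=
        add_le_add (sum_le_sum fun k _ ↦ h k F) (bound F hF _ fun x ↦ le_max_right _ _)
    _ = (n + C) * sqNorm F := by rw [sum_const, card_range, nsmul_eq_mul, add_mul]

end HasMaximalBound

/-! ### Chebyshev bounds -/

lemma theta_eq_chebyshev_theta (N : ℕ) : theta N = Chebyshev.theta N :=
  (Chebyshev.theta_eq_sum_primesLE_log N).symm

lemma theta_nonneg (N : ℕ) : 0 ≤ theta N :=
  sum_nonneg fun p _ ↦ Real.log_natCast_nonneg p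

lemma theta_le_two_mul (N : ℕ) : theta N ≤ 2 * N := by
  have log_four : Real.log 4 = 2 * Real.log 2 := by
    rw [show (4 : ℝ) = 2 ^ 2 by norm_num, Real.log_pow, Nat.cast_ofNat]
  rw [theta_eq_chebyshev_theta]
  refine (Chebyshev.theta_le_log4_mul_x (Nat.cast_nonneg N)).trans ?_
  gcongr
  linarith [Real.log_two_lt_d9]

lemma sq_mul_le_two_pow {k : ℕ} (hk : 128 ≤ k) : (64 * k) ^ 2 ≤ 2 ^ k := by
  induction k, hk using Nat.le_induction with
  | base => norm_num
  | succ k hk ih =>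
    rw [pow_succ 2 k]
    nlinarith

lemma mul_le_sqrt_two_pow {k : ℕ} (hk : 128 ≤ k) : 64 * (k : ℝ) ≤ √(2 ^ k) :=
  Real.le_sqrt_of_sq_le (by exact_mod_cast sq_mul_le_two_pow hk)

lemma two_pow_div_four_le_theta {k : ℕ} (hk : 128 ≤ k) : (2 : ℝ) ^ k / 4 ≤ theta (2 ^ k) := by
  have chebyshev := Chebyshev.theta_ge (2 ^ k)
  rw [← theta_eq_chebyshev_theta] at chebyshev
  push_cast at chebyshev
  have hk' : (128 : ℝ) ≤ k := by exact_mod_cast hk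
  have log_two_lower := Real.log_two_gt_d9
  have log_two_upper := Real.log_two_lt_d9
  have log_succ_le : Real.log (2 ^ k + 1) ≤ 2 * k := by
    calc Real.log (2 ^ k + 1) ≤ Real.log (2 ^ (k + 1)) :=
          Real.log_le_log (by positivity) (by
            rw [pow_succ]
            linarith [one_le_pow₀ (M₀ := ℝ) one_le_two (n := k)])
      _ = (k + 1) * Real.log 2 := by rw [Real.log_pow, Nat.cast_succ]
      _ ≤ 2 * k := by nlinarith
  have log_le : Real.log (2 ^ k) ≤ k := by
    rw [Real.log_pow]
    nlinarith
  have k_le := mul_le_sqrt_two_pow hk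
  have sq_sqrt : √((2 : ℝ) ^ k) * √(2 ^ k) = 2 ^ k := Real.mul_self_sqrt (by positivity)
  have error_le : 2 * √((2 : ℝ) ^ k) * Real.log (2 ^ k) ≤ 2 ^ k / 32 := by
    nlinarith [Real.sqrt_nonneg ((2 : ℝ) ^ k)]
  nlinarith

/-! ### The parameters at the scale `2 ^ k` -/

/-- The exponent `t` of the sifting range `w = 2 ^ t` used at the scale `2 ^ k`; it makes `w`
comparable with `k / 32`. For `k < 32` the subtraction truncates to `0`. -/
def scale (k : ℕ) : ℕ := Nat.log 2 k - 5

/-- The level `R = 2 ^ w` of the Selberg weight with sifting range `w = 2 ^ t`. -/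
def sieveLevel (t : ℕ) : ℕ := 2 ^ 2 ^ t

/-- The inner length of the double averages at sifting range `w = 2 ^ t`: a multiple of the period
`primorial w` of the rough weight, large enough for the large sieve at all moduli in play. -/
def modulus (t : ℕ) : ℕ := primorial (2 ^ t) * 2 ^ (16 * 2 ^ t)

/-- The outer length of the double averages at the scale `2 ^ k`: a multiple of the inner one
that exceeds `2 ^ k` by at least one period. -/
def windowLength (k : ℕ) : ℕ := (2 ^ k / modulus (scale k) + 2) * modulus (scale k)

lemma scale_bounds {k : ℕ} (hk : 128 ≤ k) :
    2 ≤ scale k ∧ 32 * 2 ^ scale k ≤ k ∧ k < 64 * 2 ^ scale k := by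
  have seven_le : 7 ≤ Nat.log 2 k := Nat.le_log_of_pow_le one_lt_two hk
  have log_eq : Nat.log 2 k = scale k + 5 := by rw [scale]; omega
  have lower : 2 ^ Nat.log 2 k ≤ k := Nat.pow_log_le_self 2 (by omega)
  have upper : k < 2 ^ (Nat.log 2 k + 1) := Nat.lt_pow_succ_log_self one_lt_two k
  rw [log_eq, pow_add] at lower
  rw [log_eq, pow_succ, pow_add] at upper
  omega

lemma two_pow_le_sieveLevel (t : ℕ) : 2 ^ t ≤ sieveLevel t := Nat.lt_two_pow_self.le

lemma one_le_sieveLevel (t : ℕ) : 1 ≤ sieveLevel t := Nat.one_le_two_pow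

lemma one_le_modulus (t : ℕ) : 1 ≤ modulus t := Nat.mul_pos (primorial_pos _) (by positivity)

lemma primorial_dvd_modulus (t : ℕ) : primorial (2 ^ t) ∣ modulus t := dvd_mul_right _ _

lemma modulus_dvd_modulus {j t : ℕ} (h : j ≤ t) : modulus j ∣ modulus t :=
  have pow_le : 2 ^ j ≤ 2 ^ t := Nat.pow_le_pow_right two_pos h
  mul_dvd_mul (primorial_dvd_primorial pow_le) (pow_dvd_pow 2 (Nat.mul_le_mul_left 16 pow_le))

lemma primorial_two_pow_le (t : ℕ) : primorial (2 ^ t) ≤ 2 ^ (2 * 2 ^ t) :=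
  (primorial_le_four_pow _).trans_eq (pow_mul 2 2 _).symm

lemma modulus_le {k : ℕ} (hk : 128 ≤ k) : modulus (scale k) ≤ 2 ^ k :=
  calc modulus (scale k) ≤ 2 ^ (2 * 2 ^ scale k) * 2 ^ (16 * 2 ^ scale k) :=
        Nat.mul_le_mul_right _ (primorial_two_pow_le _)
    _ = 2 ^ (18 * 2 ^ scale k) := by rw [← pow_add, ← add_mul]
    _ ≤ 2 ^ k := Nat.pow_le_pow_right two_pos (by have := scale_bounds hk; omega)

lemma primorial_mul_sieveLevel_pow_le (t : ℕ) :
    (primorial (2 ^ t) * sieveLevel t ^ 2) ^ 4 ≤ modulus t :=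
  calc (primorial (2 ^ t) * sieveLevel t ^ 2) ^ 4
      ≤ (2 ^ (2 * 2 ^ t) * sieveLevel t ^ 2) ^ 4 := by
        gcongr
        exact primorial_two_pow_le t
    _ = 2 ^ (16 * 2 ^ t) := by
        rw [sieveLevel, ← pow_mul, ← pow_add, ← pow_mul]
        ring_nf
    _ ≤ modulus t := Nat.le_mul_of_pos_left _ (primorial_pos _)

lemma primorial_pow_le (t : ℕ) : primorial (2 ^ t) ^ 4 ≤ modulus t :=
  (Nat.pow_le_pow_left
    (Nat.le_mul_of_pos_right _ (pow_pos (one_le_sieveLevel t) 2)) 4).trans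
    (primorial_mul_sieveLevel_pow_le t)

lemma modulus_dvd_windowLength (k : ℕ) : modulus (scale k) ∣ windowLength k := dvd_mul_left _ _

lemma two_pow_add_modulus_le_windowLength (k : ℕ) :
    2 ^ k + modulus (scale k) ≤ windowLength k := by
  have := Nat.lt_div_mul_add (a := 2 ^ k) (one_le_modulus (scale k))
  rw [windowLength, add_mul]
  omega

lemma modulus_le_windowLength (k : ℕ) : modulus (scale k) ≤ windowLength k :=
  le_add_self.trans (two_pow_add_modulus_le_windowLength k)

lemma windowLength_le {k : ℕ} (hk : 128 ≤ k) : windowLength k ≤ 3 * 2 ^ k := by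
  have := Nat.div_mul_le_self (2 ^ k) (modulus (scale k))
  have := modulus_le hk
  rw [windowLength, add_mul]
  omega

/-! ### Telescoping the rough weight -/

/-- The increments of the rough weight along the sifting ranges `1, 2, 4, …`. -/
noncomputable def roughIncrement : ℕ → ℤ → ℝ
  | 0 => roughWeight 1
  | j + 1 => fun n ↦ roughWeight (2 ^ (j + 1)) n - roughWeight (2 ^ j) n

lemma sum_roughIncrement (t : ℕ) (n : ℤ) :
    ∑ j ∈ range (t + 1), roughIncrement j n = roughWeight (2 ^ t) n := by
  rw [sum_range_succ']
  simp only [roughIncrement]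
  rw [sum_range_sub fun j ↦ roughWeight (2 ^ j) n, pow_zero, sub_add_cancel]

lemma doubleAverage_roughWeight_eq_sum (N M t : ℕ) (F : ℤ → ℝ) (x : ℤ) :
    doubleAverage N M (roughWeight (2 ^ t)) F x =
      ∑ j ∈ range (t + 1), doubleAverage N M (roughIncrement j) F x := by
  simp only [← doubleAverage_sum, sum_roughIncrement]

lemma periodic_roughIncrement (j : ℕ) : Function.Periodic (roughIncrement j) (modulus j) := by
  cases j with
  | zero => exact periodic_roughWeight (primorial_dvd_modulus 0)
  | succ j =>
    have dvd : primorial (2 ^ j) ∣ modulus (j + 1) :=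
      (primorial_dvd_modulus j).trans (modulus_dvd_modulus j.le_succ)
    exact (periodic_roughWeight (primorial_dvd_modulus (j + 1))).sub (periodic_roughWeight dvd)

lemma sqNorm_doubleAverage_roughIncrement_le (j : ℕ) (F : ℤ → ℝ) :
    sqNorm (doubleAverage (modulus j) (modulus j) (roughIncrement j) F) ≤
      ENNReal.ofReal (16 * ((1 / 2) ^ j) ^ 2) * sqNorm F := by
  have hM := primorial_pow_le j
  cases j with
  | zero =>
    refine (sqNorm_doubleAverage_roughWeight_le hM hM F).trans ?_
    gcongr
    norm_num
  | succ j =>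
    refine (sqNorm_doubleAverage_roughWeight_sub_le Nat.one_le_two_pow
      (Nat.pow_le_pow_right two_pos j.le_succ) hM hM F).trans_eq ?_
    congr 2
    push_cast
    rw [one_div_pow, one_div_pow, pow_succ]
    ring

lemma abs_doubleAverage_roughIncrement_le {j k : ℕ} (hj : j ≤ scale k) (F : ℤ → ℝ) (x : ℤ) :
    |doubleAverage (windowLength k) (modulus (scale k)) (roughIncrement j) F x| ≤
      boxAverage (windowLength k / modulus j) (modulus j)
        (fun y ↦ |doubleAverage (modulus j) (modulus j) (roughIncrement j) F y|) x := by
  have inner := modulus_dvd_modulus hj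
  have outer := inner.trans (modulus_dvd_windowLength k)
  have bound := abs_doubleAverage_mul_le_boxAverage
    (Nat.div_pos (Nat.le_of_dvd (one_le_modulus _) inner) (one_le_modulus j))
    (Nat.div_le_div_right (modulus_le_windowLength k)) (periodic_roughIncrement j) F x
  rwa [Nat.div_mul_cancel inner, Nat.div_mul_cancel outer] at bound

theorem hasMaximalBound_roughWeight (n : ℕ) :
    HasMaximalBound n fun k F ↦
      doubleAverage (windowLength k) (modulus (scale k)) (roughWeight (2 ^ scale k)) F := by
  refine ⟨4 * ENNReal.ofReal (128 ^ 2 * 16), ENNReal.mul_ne_top ofNat_ne_top ofReal_ne_top,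
    fun F _ κ _ ↦ ?_⟩
  let D (j : ℕ) (y : ℤ) : ℝ := |doubleAverage (modulus j) (modulus j) (roughIncrement j) F y|
  let length (j : ℕ) (x : ℤ) : ℕ :=
    if j ≤ scale (κ x) then windowLength (κ x) / modulus j else 1
  have one_le_length (j : ℕ) (x : ℤ) : 1 ≤ length j x := by
    simp only [length]
    split_ifs with h
    · exact Nat.div_pos ((Nat.le_of_dvd (one_le_modulus _) (modulus_dvd_modulus h)).trans
        (modulus_le_windowLength _)) (one_le_modulus j)
    · exact le_rfl
  rw [mul_assoc]
  refine sqNorm_le_four_mul_of_geometric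
    (u := fun j x ↦ boxAverage (length j x) (modulus j) (D j) x) (fun x ↦ ?_) fun j ↦ ?_
  · beta_reduce
    rw [doubleAverage_roughWeight_eq_sum]
    refine (enorm_sum_le _ _).trans ((sum_le_sum fun j hj ↦ ?_).trans (ENNReal.sum_le_tsum _))
    have hj' : j ≤ scale (κ x) := Nat.lt_succ_iff.1 (mem_range.1 hj)
    simp only [length, if_pos hj', ← ofReal_norm]
    exact ENNReal.ofReal_le_ofReal
      ((abs_doubleAverage_roughIncrement_le hj' F x).trans (le_abs_self _))
  · calc sqNorm (fun x ↦ boxAverage (length j x) (modulus j) (D j) x)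
        ≤ ENNReal.ofReal (128 ^ 2) * sqNorm (D j) :=
          sqNorm_boxAverage_le (one_le_modulus j) (one_le_length j) fun _ ↦ abs_nonneg _
      _ ≤ ENNReal.ofReal (128 ^ 2) *
            (ENNReal.ofReal (16 * ((1 / 2) ^ j) ^ 2) * sqNorm F) := by
          gcongr
          exact (sqNorm_norm _).trans_le (sqNorm_doubleAverage_roughIncrement_le j F)
      _ = ENNReal.ofReal (((1 / 2) ^ j) ^ 2) * (ENNReal.ofReal (128 ^ 2 * 16) * sqNorm F) := by
          rw [← mul_assoc, ← mul_assoc, ← ENNReal.ofReal_mul (by positivity),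
            ← ENNReal.ofReal_mul (by positivity)]
          ring_nf

theorem hasMaximalBound_selbergWeight_sub_roughWeight :
    HasMaximalBound 128 fun k F ↦ doubleAverage (windowLength k) (modulus (scale k))
      (fun n ↦ selbergWeight (2 ^ scale k) (sieveLevel (scale k)) n -
        roughWeight (2 ^ scale k) n) F := by
  refine .of_sqNorm_le_div_sq 512 fun k hk F ↦ ?_
  obtain ⟨two_le, -, lt_scale⟩ := scale_bounds hk
  have hk' : (0 : ℝ) < k := by exact_mod_cast (by omega : 0 < k)
  have lt_scale' : (k : ℝ) < 64 * 2 ^ scale k := by exact_mod_cast lt_scale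
  have hM := primorial_mul_sieveLevel_pow_le (scale k)
  refine (sqNorm_doubleAverage_selbergWeight_sub_le (Nat.pow_le_pow_right two_pos two_le)
    (two_pow_le_sieveLevel _) (hM.trans (modulus_le_windowLength k)) hM F).trans ?_
  have ratio_le : 8 / 2 ^ scale k ≤ 512 / (k : ℝ) := by
    rw [div_le_div_iff₀ (by positivity) hk']
    linarith
  gcongr
  calc 4 * (4 / ((2 ^ scale k : ℕ) : ℝ)) ^ 2 = (8 / 2 ^ scale k) ^ 2 := by
        push_cast
        ring
    _ ≤ (512 / (k : ℝ)) ^ 2 := pow_le_pow_left₀ (by positivity) ratio_le 2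

/-! ### Prime averages -/

/-- The part of the logarithmically weighted average over the primes `p ≤ N` that comes from the
primes `p ≤ R`. -/
noncomputable def truncatedPrimeAverage (R N : ℕ) (F : ℤ → ℝ) (x : ℤ) : ℝ :=
  ∑ p ∈ primesUpTo R, Real.log p / theta N * F (x + p)

lemma log_div_theta_nonneg (p N : ℕ) : 0 ≤ Real.log p / theta N :=
  div_nonneg (Real.log_natCast_nonneg p) (theta_nonneg N)

lemma truncatedPrimeAverage_nonneg (R N : ℕ) {F : ℤ → ℝ} (hF : ∀ x, 0 ≤ F x) (x : ℤ) :
    0 ≤ truncatedPrimeAverage R N F x :=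
  sum_nonneg fun p _ ↦ mul_nonneg (log_div_theta_nonneg p N) (hF _)

lemma sqNorm_truncatedPrimeAverage_le (R N : ℕ) (F : ℤ → ℝ) :
    sqNorm (truncatedPrimeAverage R N F) ≤ ENNReal.ofReal ((theta R / theta N) ^ 2) * sqNorm F := by
  have weight_nonneg (p : ℕ) (_ : p ∈ primesUpTo R) := log_div_theta_nonneg p N
  have sum_weight : ∑ p ∈ primesUpTo R, Real.log p / theta N = theta R / theta N :=
    (sum_div _ _ _).symm
  have translate (p : ℕ) : sqNorm (fun x ↦ F (x + p)) = sqNorm F :=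
    sqNorm_comp_equiv (Equiv.addRight (p : ℤ)) F
  have bound := sqNorm_sum_smul_le (primesUpTo R) weight_nonneg fun p x ↦ F (x + p)
  simp only [translate, ← sum_mul, ← ENNReal.ofReal_sum_of_nonneg weight_nonneg, sum_weight,
    ← mul_assoc, ← ENNReal.ofReal_mul (div_nonneg (theta_nonneg R) (theta_nonneg N)), ← sq] at bound
  exact bound

lemma theta_sieveLevel_div_theta_le {k : ℕ} (hk : 128 ≤ k) :
    theta (sieveLevel (scale k)) / theta (2 ^ k) ≤ 512 / k := by
  obtain ⟨-, le_scale, lt_scale⟩ := scale_bounds hk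
  have hk' : (0 : ℝ) < k := by exact_mod_cast (by omega : 0 < k)
  have level_mul_le : sieveLevel (scale k) * k ≤ 64 * 2 ^ k :=
    calc sieveLevel (scale k) * k ≤ sieveLevel (scale k) * (64 * sieveLevel (scale k)) := by
          have := two_pow_le_sieveLevel (scale k)
          exact Nat.mul_le_mul_left _ (by omega)
      _ = 64 * 2 ^ (2 * 2 ^ scale k) := by
          rw [sieveLevel, two_mul, pow_add]
          ring
      _ ≤ 64 * 2 ^ k := Nat.mul_le_mul_left _ (Nat.pow_le_pow_right two_pos (by omega))
  have level_mul_le' : (sieveLevel (scale k) : ℝ) * k ≤ 64 * 2 ^ k := by exact_mod_cast level_mul_le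
  have theta_lower := two_pow_div_four_le_theta hk
  have theta_upper := theta_le_two_mul (sieveLevel (scale k))
  have hpow : (0 : ℝ) < 2 ^ k := by positivity
  rw [div_le_div_iff₀ (by linarith) hk']
  nlinarith

lemma log_le_mul_log_sieveLevel {k p : ℕ} (hk : 128 ≤ k) (hp : 0 < p) (hpk : p ≤ 2 ^ k) :
    Real.log p ≤ 64 * Real.log (sieveLevel (scale k)) := by
  have lt_scale : (k : ℝ) < 64 * 2 ^ scale k := by exact_mod_cast (scale_bounds hk).2.2
  calc Real.log p ≤ Real.log (2 ^ k) :=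
        Real.log_le_log (by exact_mod_cast hp) (by exact_mod_cast hpk)
    _ = k * Real.log 2 := Real.log_pow _ _
    _ ≤ 64 * 2 ^ scale k * Real.log 2 := by gcongr
    _ = 64 * Real.log (sieveLevel (scale k)) := by
        rw [sieveLevel, Nat.cast_pow, Real.log_pow]
        push_cast
        ring

lemma sum_log_mul_le_doubleAverage {k : ℕ} (hk : 128 ≤ k) {F : ℤ → ℝ} (hF : ∀ x, 0 ≤ F x)
    (x : ℤ) :
    ∑ p ∈ primesBetween (sieveLevel (scale k)) (2 ^ k), Real.log p * F (x + p) ≤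
      128 * (windowLength k * doubleAverage (windowLength k) (modulus (scale k))
        (selbergWeight (2 ^ scale k) (sieveLevel (scale k))) F x) := by
  have mem {p : ℕ} (hp : p ∈ primesBetween (sieveLevel (scale k)) (2 ^ k)) :
      p ≤ 2 ^ k ∧ p.Prime ∧ sieveLevel (scale k) < p := by
    rw [primesBetween, mem_sdiff, mem_primesUpTo, mem_primesUpTo] at hp
    exact ⟨hp.1.1, hp.1.2, lt_of_not_ge fun h ↦ hp.2 ⟨h, hp.1.2⟩⟩
  calc ∑ p ∈ primesBetween (sieveLevel (scale k)) (2 ^ k), Real.log p * F (x + p)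
      ≤ ∑ p ∈ primesBetween (sieveLevel (scale k)) (2 ^ k),
          64 * Real.log (sieveLevel (scale k)) * F (x + p) :=
        sum_le_sum fun p hp ↦ mul_le_mul_of_nonneg_right
          (log_le_mul_log_sieveLevel hk (mem hp).2.1.pos (mem hp).1) (hF _)
    _ = 128 * (Real.log (sieveLevel (scale k)) / 2 *
          ∑ p ∈ primesBetween (sieveLevel (scale k)) (2 ^ k), F (x + p)) := by
        rw [← mul_sum]
        ring
    _ ≤ _ := mul_le_mul_of_nonneg_left ?_ (by norm_num)
  exact mul_sum_le_mul_doubleAverage (one_le_modulus _)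
          (two_pow_add_modulus_le_windowLength k) (selbergWeight_nonneg _ (one_le_sieveLevel _))
          hF (fun p hp ↦ (mem hp).1) (fun p hp ↦ log_div_two_le_selbergWeight
            (two_pow_le_sieveLevel _) (one_le_sieveLevel _) (mem hp).2.1 (mem hp).2.2) x

lemma truncatedPrimeAverage_self_le {k : ℕ} (hk : 128 ≤ k) {F : ℤ → ℝ} (hF : ∀ x, 0 ≤ F x) (x : ℤ) :
    truncatedPrimeAverage (2 ^ k) (2 ^ k) F x ≤
      1536 * doubleAverage (windowLength k) (modulus (scale k))
        (selbergWeight (2 ^ scale k) (sieveLevel (scale k))) F x +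
      truncatedPrimeAverage (sieveLevel (scale k)) (2 ^ k) F x := by
  have level_le : sieveLevel (scale k) ≤ 2 ^ k :=
    Nat.pow_le_pow_right two_pos (by have := scale_bounds hk; omega)
  have theta_lower := two_pow_div_four_le_theta hk
  have theta_pos : 0 < theta (2 ^ k) := lt_of_lt_of_le (by positivity) theta_lower
  have window_le : (windowLength k : ℝ) ≤ 3 * 2 ^ k := by exact_mod_cast windowLength_le hk
  have average_nonneg := doubleAverage_nonneg (windowLength k) (modulus (scale k))
    (selbergWeight_nonneg (2 ^ scale k) (one_le_sieveLevel (scale k))) hF x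
  rw [truncatedPrimeAverage, truncatedPrimeAverage, ← sum_sdiff (primesUpTo_mono level_le)]
  gcongr
  simp only [div_mul_eq_mul_div]
  rw [← sum_div, div_le_iff₀ theta_pos]
  refine (sum_log_mul_le_doubleAverage hk hF x).trans ?_
  nlinarith

theorem hasMaximalBound_truncatedPrimeAverage_self :
    HasMaximalBound 0 fun k F ↦ truncatedPrimeAverage (2 ^ k) (2 ^ k) F := by
  have selberg : HasMaximalBound 128 fun k F x ↦
      doubleAverage (windowLength k) (modulus (scale k))
        (selbergWeight (2 ^ scale k) (sieveLevel (scale k))) F x := by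
    simpa only [← doubleAverage_add, add_sub_cancel] using
      (hasMaximalBound_roughWeight 128).add hasMaximalBound_selbergWeight_sub_roughWeight
  have small : HasMaximalBound 128 fun k F ↦
      truncatedPrimeAverage (sieveLevel (scale k)) (2 ^ k) F := by
    refine .of_sqNorm_le_div_sq 512 fun k hk F ↦
      (sqNorm_truncatedPrimeAverage_le _ _ F).trans ?_
    gcongr ENNReal.ofReal (?_ ^ 2) * _
    exacts [div_nonneg (theta_nonneg _) (theta_nonneg _), theta_sieveLevel_div_theta_le hk]
  refine .of_start (((selberg.const_mul 1536).add small).mono fun k hk F hF x ↦ ?_) fun k F ↦ ?_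
  · rw [abs_of_nonneg (truncatedPrimeAverage_nonneg _ _ hF x)]
    exact (truncatedPrimeAverage_self_le hk hF x).trans (le_abs_self _)
  · refine (sqNorm_truncatedPrimeAverage_le _ _ F).trans (mul_le_of_le_one_left' ?_)
    refine ENNReal.ofReal_le_one.2 (pow_le_one₀ ?_ (div_self_le_one _))
    exact div_nonneg (theta_nonneg _) (theta_nonneg _)

lemma norm_weightedPrimeAvg_le (f : ℤ → ℂ) (N : ℕ) (x : ℤ) :
    ‖weightedPrimeAvg f N x‖ ≤ truncatedPrimeAverage N N (fun y ↦ ‖f y‖) x := by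
  rw [weightedPrimeAvg, mul_sum]
  refine (norm_sum_le _ _).trans_eq (sum_congr rfl fun p _ ↦ ?_)
  rw [norm_mul, norm_mul, norm_inv, Complex.norm_real, Complex.norm_real,
    Real.norm_of_nonneg (theta_nonneg N), Real.norm_of_nonneg (Real.log_natCast_nonneg p)]
  ring

lemma exists_iSup_norm_weightedPrimeAvg_le (f : ℤ → ℂ) (x : ℤ) :
    ∃ k : ℕ, (⨆ (n : ℕ) (_ : 1 ≤ n), ‖weightedPrimeAvg f (2 ^ n) x‖) ≤
      2 * truncatedPrimeAverage (2 ^ k) (2 ^ k) (fun y ↦ ‖f y‖) x := by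
  set s := ⨆ (n : ℕ) (_ : 1 ≤ n), ‖weightedPrimeAvg f (2 ^ n) x‖ with hs
  rcases le_or_gt s 0 with nonpos | pos
  · exact ⟨0, nonpos.trans <| mul_nonneg two_pos.le <|
      truncatedPrimeAverage_nonneg _ _ (fun _ ↦ norm_nonneg _) x⟩
  · obtain ⟨k, hk⟩ := exists_lt_of_lt_ciSup (hs ▸ half_lt_self pos)
    have inner_le :
        (⨆ _ : 1 ≤ k, ‖weightedPrimeAvg f (2 ^ k) x‖) ≤ ‖weightedPrimeAvg f (2 ^ k) x‖ :=
      Real.iSup_le (fun _ ↦ le_rfl) (norm_nonneg _)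
    exact ⟨k, by linarith [norm_weightedPrimeAvg_le f (2 ^ k) x]⟩

theorem exists_sqNorm_iSup_norm_weightedPrimeAvg_le :
    ∃ C ≠ ∞, ∀ f : ℤ → ℂ,
      sqNorm (fun x ↦ ⨆ (n : ℕ) (_ : 1 ≤ n), ‖weightedPrimeAvg f (2 ^ n) x‖) ≤ C * sqNorm f := by
  obtain ⟨C, hC, bound⟩ := hasMaximalBound_truncatedPrimeAverage_self
  refine ⟨ENNReal.ofReal (2 ^ 2) * C, ENNReal.mul_ne_top ofReal_ne_top hC, fun f ↦ ?_⟩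
  choose κ hκ using exists_iSup_norm_weightedPrimeAvg_le f
  calc sqNorm (fun x ↦ ⨆ (n : ℕ) (_ : 1 ≤ n), ‖weightedPrimeAvg f (2 ^ n) x‖)
      ≤ sqNorm (fun x ↦
          2 * truncatedPrimeAverage (2 ^ κ x) (2 ^ κ x) (fun y ↦ ‖f y‖) x) := by
        refine sqNorm_mono fun x ↦ ?_
        rw [Real.norm_of_nonneg (Real.iSup_nonneg fun _ ↦ Real.iSup_nonneg fun _ ↦ norm_nonneg _)]
        exact (hκ x).trans (le_abs_self _)
    _ ≤ ENNReal.ofReal (2 ^ 2) * (C * sqNorm fun y ↦ ‖f y‖) := by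
        rw [sqNorm_const_mul]
        gcongr
        exact bound _ (fun _ ↦ norm_nonneg _) κ fun _ ↦ Nat.zero_le _
    _ = ENNReal.ofReal (2 ^ 2) * C * sqNorm f := by rw [sqNorm_norm, mul_assoc]

/-- `ℓ²` bound for the maximal function of the weighted averages along the primes:
`‖sup_{n ∈ ℕ} |ℳ_{2^n} f|‖_{ℓ²} ≤ C ‖f‖_{ℓ²}`. -/
theorem stmt_16 :
    ∃ C : ℝ, 0 < C ∧
      ∀ (f : ℤ → ℂ), Summable (fun x : ℤ => ‖f x‖ ^ 2) →
        Real.sqrt (∑' x : ℤ,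
            (⨆ (n : ℕ) (_ : 1 ≤ n), ‖weightedPrimeAvg f (2 ^ n) x‖) ^ 2) ≤
          C * Real.sqrt (∑' x : ℤ, ‖f x‖ ^ 2) := by
  obtain ⟨C, hC, bound⟩ := exists_sqNorm_iSup_norm_weightedPrimeAvg_le
  refine ⟨√C.toReal + 1, by positivity, fun f hf ↦ ?_⟩
  have real_bound := sqrt_tsum_sq_norm_le_of_sqNorm_le hC hf (bound f)
  simp only [Real.norm_eq_abs, sq_abs] at real_bound
  refine real_bound.trans ?_
  gcongr
  exact le_add_of_nonneg_right zero_le_one
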